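/- arXiv:2106.09131 — 8 statements merged into one kernel-verified Lean document; each statement's English description precedes it below -/
import Mathlib

section
/- Let n ≥ 4, a ≥ 0 and r₀ > 0, and let μ be a finite Borel measure on Euclidean space ℝⁿ satisfying the (a,r₀)-monotonicity property. Then for every x ∈ ℝⁿ the (n−4)-density Θ^{n−4}(μ, x) := lim_{r→0⁺} r^{4−n} μ(closedBall x r) exists as a finite nonnegative real number, the function x ↦ Θ^{n−4}(μ, x) is upper semicontinuous on ℝⁿ, and consequently for every ε > 0 the set {x ∈ ℝⁿ : Θ^{n−4}(μ, x) ≥ ε} is closed. -/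
open MeasureTheory Metric Filter Set
open scoped Topology ENNReal

/-- For a finite Borel measure on `ℝⁿ` (`n ≥ 4`) satisfying the
`(a, r₀)`-monotonicity property (the function `r ↦ e^{a r} r^{4-n} μ(closedBall x r)` is
nondecreasing on `(0, r₀]` for every `x`), the `(n-4)`-density
`Θ(x) = lim_{r → 0⁺} r^{4-n} μ(closedBall x r)` exists as a finite nonnegative real at every
point, is upper semicontinuous in `x`, and the superlevel sets `{Θ ≥ ε}` are closed. -/
theorem omega_ym_density_exists_usc_closed
    (n : ℕ) (hn : 4 ≤ n) (a : ℝ) (ha : 0 ≤ a) (r₀ : ℝ) (hr₀ : 0 < r₀)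
    (μ : Measure (EuclideanSpace ℝ (Fin n))) [IsFiniteMeasure μ]
    (hmono : ∀ x : EuclideanSpace ℝ (Fin n),
      MonotoneOn
        (fun r : ℝ => Real.exp (a * r) * r ^ ((4 : ℝ) - n) * (μ (closedBall x r)).toReal)
        (Ioc (0 : ℝ) r₀)) :
    ∃ Θ : EuclideanSpace ℝ (Fin n) → ℝ,
      (∀ x, 0 ≤ Θ x ∧
        Tendsto (fun r : ℝ => r ^ ((4 : ℝ) - n) * (μ (closedBall x r)).toReal)
          (𝓝[>] (0 : ℝ)) (𝓝 (Θ x))) ∧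
      UpperSemicontinuous Θ ∧
      (∀ ε : ℝ, 0 < ε → IsClosed {x : EuclideanSpace ℝ (Fin n) | ε ≤ Θ x}) := by
  set f : EuclideanSpace ℝ (Fin n) → ℝ → ℝ := fun x r =>
    Real.exp (a * r) * r ^ ((4 : ℝ) - n) * (μ (closedBall x r)).toReal with hf
  have hf0 : ∀ x r, 0 < r → 0 ≤ f x r := fun x r hr => by
    simp only [hf]; positivity
  have hbdd : ∀ x, BddBelow (f x '' Ioo 0 r₀) := fun x => by
    refine ⟨0, ?_⟩
    rintro _ ⟨r, hr, rfl⟩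
    exact hf0 x r hr.1
  have hne : ∀ x, (f x '' Ioo 0 r₀).Nonempty := fun x => (nonempty_Ioo.2 hr₀).image _
  have husc : UpperSemicontinuous (fun x => sInf (f x '' Ioo 0 r₀)) := by
    intro x c hc
    obtain ⟨_, ⟨r, hr, rfl⟩, hrc⟩ := exists_lt_of_csInf_lt (hne x) hc
    have hcont : ContinuousAt
        (fun s : ℝ => Real.exp (a * s) * s ^ ((4 : ℝ) - n) * (μ (closedBall x r)).toReal) r := by
      have h1 : ContinuousAt (fun s : ℝ => s ^ ((4 : ℝ) - n)) r :=
        Real.continuousAt_rpow_const _ _ (Or.inl hr.1.ne')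
      have h2 : ContinuousAt (fun s : ℝ => Real.exp (a * s)) r := by fun_prop
      exact (h2.mul h1).mul continuousAt_const
    have hev := hcont.eventually_lt_const hrc
    have hev' : ∀ᶠ s in 𝓝[<] r, Real.exp (a * s) * s ^ ((4 : ℝ) - n) *
        (μ (closedBall x r)).toReal < c := hev.filter_mono nhdsWithin_le_nhds
    obtain ⟨s, hs, hsr⟩ := (hev'.and (Ioo_mem_nhdsLT hr.1)).exists
    filter_upwards [ball_mem_nhds x (sub_pos.2 hsr.2)] with y hy
    refine lt_of_le_of_lt (csInf_le (hbdd y) ⟨s, ⟨hsr.1, hsr.2.trans hr.2⟩, rfl⟩) ?_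
    refine lt_of_le_of_lt ?_ hs
    have hsub : closedBall y s ⊆ closedBall x r :=
      closedBall_subset_closedBall' (by have := mem_ball.1 hy; linarith)
    have hm : (μ (closedBall y s)).toReal ≤ (μ (closedBall x r)).toReal :=
      ENNReal.toReal_mono (measure_ne_top _ _) (measure_mono hsub)
    have hs0 := hsr.1
    exact mul_le_mul_of_nonneg_left hm (by positivity)
  refine ⟨fun x => sInf (f x '' Ioo 0 r₀), fun x => ⟨?_, ?_⟩, husc, ?_⟩
  · apply le_csInf (hne x)
    rintro _ ⟨r, hr, rfl⟩
    exact hf0 x r hr.1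
  · have h1 : Tendsto (f x) (𝓝[>] 0) (𝓝 (sInf (f x '' Ioo 0 r₀))) :=
      MonotoneOn.tendsto_nhdsWithin_Ioo_right (nonempty_Ioo.2 hr₀)
        ((hmono x).mono Ioo_subset_Ioc_self) (hbdd x)
    have h2 : Tendsto (fun r : ℝ => Real.exp (-(a * r))) (𝓝[>] 0) (𝓝 1) := by
      have : ContinuousAt (fun r : ℝ => Real.exp (-(a * r))) 0 := by fun_prop
      have h := this.tendsto
      simp only [mul_zero, neg_zero, Real.exp_zero] at h
      exact h.mono_left nhdsWithin_le_nhds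
    have h3 := h2.mul h1
    rw [one_mul] at h3
    refine h3.congr fun r => ?_
    simp only [hf]
    rw [← mul_assoc, ← mul_assoc, ← Real.exp_add]
    simp
  · intro ε _
    exact husc.isClosed_preimage ε
end

section
/- Let n ≥ 1, let μ_i be a sequence of finite Borel measures on Euclidean space ℝⁿ converging weakly to a finite Borel measure μ, let x_i → x in ℝⁿ, and let r > 0 be such that μ(metric sphere {y : dist(y,x) = r}) = 0. Then μ_i(closedBall x_i r) → μ(closedBall x r) and μ_i(ball x_i r) → μ(ball x r). -/
open MeasureTheory Metric Filter Set
open scoped Topology ENNReal BoundedContinuousFunction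

/-- tent function sandwich -/
theorem tent_aux {n : ℕ} (x : EuclideanSpace ℝ (Fin n)) (a b : ℝ) (hab : a < b) :
    ∃ f : EuclideanSpace ℝ (Fin n) →ᵇ ℝ,
      ∀ (ν : Measure (EuclideanSpace ℝ (Fin n))) [IsFiniteMeasure ν],
        ν.real (closedBall x a) ≤ ∫ y, f y ∂ν ∧ ∫ y, f y ∂ν ≤ ν.real (closedBall x b) := by
  have hd : 0 < b - a := sub_pos.2 hab
  let g : EuclideanSpace ℝ (Fin n) → ℝ := fun y => max 0 (min 1 ((b - dist y x) / (b - a)))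
  have hg : Continuous g := by fun_prop
  have h0 : ∀ y, 0 ≤ g y := fun y => le_max_left _ _
  have h1 : ∀ y, g y ≤ 1 := fun y => max_le zero_le_one (min_le_left _ _)
  let f : EuclideanSpace ℝ (Fin n) →ᵇ ℝ :=
    BoundedContinuousFunction.ofNormedAddCommGroup g hg 1 (fun y => by
      rw [Real.norm_eq_abs, abs_of_nonneg (h0 y)]; exact h1 y)
  have hfg : ∀ y, f y = g y := fun y => rfl
  refine ⟨f, fun ν _ => ?_⟩
  have hi : Integrable f ν := f.integrable ν
  constructor
  · rw [← integral_indicator_one (μ := ν) (isClosed_closedBall (x := x) (ε := a)).measurableSet]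
    refine integral_mono ((integrable_const (1 : ℝ)).indicator
      isClosed_closedBall.measurableSet) hi fun y => ?_
    refine indicator_le' (fun y hy => ?_) (fun y _ => h0 y) y
    have : 1 ≤ (b - dist y x) / (b - a) := by
      rw [le_div_iff₀ hd]; have := mem_closedBall.1 hy; linarith
    exact le_max_of_le_right (le_min le_rfl this)
  · rw [← integral_indicator_one (μ := ν) (isClosed_closedBall (x := x) (ε := b)).measurableSet]
    refine integral_mono hi ((integrable_const (1 : ℝ)).indicator
      isClosed_closedBall.measurableSet) fun y => ?_
    refine le_indicator (fun y _ => h1 y) (fun y hy => ?_) y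
    have hy' : b < dist y x := by simpa using hy
    have : (b - dist y x) / (b - a) ≤ 0 := div_nonpos_of_nonpos_of_nonneg (by linarith) hd.le
    exact max_le le_rfl ((min_le_right _ _).trans this)

/-- moving-center portmanteau lemma. If finite Borel measures `μᵢ` on `ℝⁿ`
converge weakly to a finite Borel measure `μ`, the centers `xᵢ → x`, and the sphere
`{y | dist y x = r}` is `μ`-null for the radius `r > 0`, then the masses of the closed
(and open) balls `B_r(xᵢ)` for `μᵢ` converge to those of `B_r(x)` for `μ`. -/
theorem weak_limit_moving_center_ball_mass
    (n : ℕ) (hn : 1 ≤ n)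
    (μs : ℕ → Measure (EuclideanSpace ℝ (Fin n))) (μ : Measure (EuclideanSpace ℝ (Fin n)))
    [∀ i, IsFiniteMeasure (μs i)] [IsFiniteMeasure μ]
    (hweak : ∀ f : EuclideanSpace ℝ (Fin n) →ᵇ ℝ,
      Tendsto (fun i => ∫ y, f y ∂(μs i)) atTop (𝓝 (∫ y, f y ∂μ)))
    (xs : ℕ → EuclideanSpace ℝ (Fin n)) (x : EuclideanSpace ℝ (Fin n))
    (hx : Tendsto xs atTop (𝓝 x))
    (r : ℝ) (hr : 0 < r)
    (hsphere : μ {y : EuclideanSpace ℝ (Fin n) | dist y x = r} = 0) :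
    Tendsto (fun i => (μs i (closedBall (xs i) r)).toReal) atTop
        (𝓝 ((μ (closedBall x r)).toReal)) ∧
      Tendsto (fun i => (μs i (ball (xs i) r)).toReal) atTop
        (𝓝 ((μ (ball x r)).toReal)) := by
  have hH : Tendsto (fun t => μ.real (closedBall x t)) (𝓝 r) (𝓝 (μ.real (closedBall x r))) := by
    refine (ENNReal.tendsto_toReal (measure_ne_top _ _)).comp ?_
    refine tendsto_measure_of_ae_tendsto_indicator_of_isFiniteMeasure (𝓝 r)
      isClosed_closedBall.measurableSet (fun t => isClosed_closedBall.measurableSet) ?_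
    have hae : ∀ᵐ y ∂μ, dist y x ≠ r := by
      rw [ae_iff]; simpa using hsphere
    filter_upwards [hae] with y hy
    rcases lt_or_gt_of_ne hy with h | h
    · filter_upwards [lt_mem_nhds h] with t ht
      simp [ht.le, h.le]
    · filter_upwards [gt_mem_nhds h] with t ht
      simp [ht.not_ge, h.not_ge]
  have hball : μ.real (ball x r) = μ.real (closedBall x r) := by
    refine le_antisymm (measureReal_mono ball_subset_closedBall) ?_
    rw [← ball_union_sphere]
    refine (measureReal_union_le _ _).trans ?_
    have : μ.real (sphere x r) = 0 := by
      simp only [Measure.real]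
      rw [show μ (sphere x r) = 0 from hsphere]; rfl
    rw [this, add_zero]
  have key : ∀ ε > 0, ∀ᶠ i in atTop,
      μ.real (closedBall x r) - ε < (μs i).real (ball (xs i) r) ∧
      (μs i).real (closedBall (xs i) r) < μ.real (closedBall x r) + ε := by
    intro ε hε
    obtain ⟨η, hη, hη'⟩ := Metric.tendsto_nhds_nhds.1 hH (ε / 2) (by positivity)
    set δ := η / 4 with hδ
    have hδ0 : 0 < δ := by positivity
    have e1 := hη' (x := r - 2 * δ) (by rw [Real.dist_eq, abs_lt]; constructor <;> linarith)
    have e2 := hη' (x := r + 2 * δ) (by rw [Real.dist_eq, abs_lt]; constructor <;> linarith)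
    rw [Real.dist_eq, abs_lt] at e1 e2
    obtain ⟨f, hf⟩ := tent_aux x (r - 2 * δ) (r - δ) (by linarith)
    obtain ⟨g, hg⟩ := tent_aux x (r + δ) (r + 2 * δ) (by linarith)
    have c1 := (hweak f).eventually (lt_mem_nhds (show ∫ y, f y ∂μ - ε / 2 < ∫ y, f y ∂μ by linarith))
    have c2 := (hweak g).eventually (gt_mem_nhds (show ∫ y, g y ∂μ < ∫ y, g y ∂μ + ε / 2 by linarith))
    filter_upwards [c1, c2, Metric.tendsto_nhds.1 hx δ hδ0] with i h1 h2 h3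
    have s1 : closedBall x (r - δ) ⊆ ball (xs i) r := 
      closedBall_subset_ball' (by rw [dist_comm]; linarith)
    have s2 : closedBall (xs i) r ⊆ closedBall x (r + δ) :=
      closedBall_subset_closedBall' (by linarith)
    have m1 := measureReal_mono (μ := μs i) s1
    have m2 := measureReal_mono (μ := μs i) s2
    have f1 := (hf μ).1
    have f2 := (hf (μs i)).2
    have g1 := (hg μ).2
    have g2 := (hg (μs i)).1
    constructor <;> linarith
  have mono : ∀ i, (μs i).real (ball (xs i) r) ≤ (μs i).real (closedBall (xs i) r) :=
    fun i => measureReal_mono ball_subset_closedBall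
  change Tendsto (fun i => (μs i).real (closedBall (xs i) r)) atTop (𝓝 (μ.real (closedBall x r))) ∧
    Tendsto (fun i => (μs i).real (ball (xs i) r)) atTop (𝓝 (μ.real (ball x r)))
  rw [hball]
  constructor <;> refine Metric.tendsto_nhds.2 fun ε hε => ?_ <;>
    filter_upwards [key ε hε] with i hi <;>
    rw [Real.dist_eq, abs_lt] <;> have := mono i <;> constructor <;> linarith [hi.1, hi.2]
end

section
/- Let n ≥ 4, a ≥ 0, r₀ > 0, and let μ_i be a sequence of finite Borel measures on Euclidean space ℝⁿ, each satisfying the (a,r₀)-monotonicity property, converging weakly to a finite Borel measure μ. Then μ also satisfies the (a,r₀)-monotonicity property, i.e. for every x ∈ ℝⁿ the function r ↦ e^{a r} r^{4−n} μ(closedBall x r) is nondecreasing on (0, r₀]. -/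
open MeasureTheory Metric Filter Set
open scoped Topology ENNReal BoundedContinuousFunction

lemma exists_cutoff_aux {X : Type*} [PseudoMetricSpace X] [MeasurableSpace X] [BorelSpace X]
    (x : X) {s t : ℝ} (hst : s < t) :
    ∃ f : X →ᵇ ℝ, ∀ ν : Measure X, IsFiniteMeasure ν →
      (ν (closedBall x s)).toReal ≤ ∫ y, f y ∂ν ∧ ∫ y, f y ∂ν ≤ (ν (closedBall x t)).toReal := by
  have hc : Continuous (fun y : X => max 0 (min 1 ((t - dist y x) / (t - s)))) := by fun_prop
  refine ⟨BoundedContinuousFunction.ofNormedAddCommGroup _ hc 1 ?_, ?_⟩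
  · intro y
    rw [Real.norm_eq_abs, abs_of_nonneg (le_max_left _ _)]
    exact max_le zero_le_one (min_le_left _ _)
  · intro ν hν
    have hts : 0 < t - s := sub_pos.2 hst
    have hi := BoundedContinuousFunction.integrable ν
      (BoundedContinuousFunction.ofNormedAddCommGroup _ hc 1 (by
        intro y
        rw [Real.norm_eq_abs, abs_of_nonneg (le_max_left _ _)]
        exact max_le zero_le_one (min_le_left _ _)))
    have key : ∀ u, (ν (closedBall x u)).toReal
        = ∫ y, (closedBall x u).indicator (fun _ => (1 : ℝ)) y ∂ν := by
      intro u
      rw [integral_indicator isClosed_closedBall.measurableSet]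
      simp [Measure.real]
    have ki : ∀ u, Integrable ((closedBall x u).indicator (fun _ => (1 : ℝ))) ν := fun u =>
      (integrable_const _).indicator isClosed_closedBall.measurableSet
    rw [key, key]
    constructor
    · refine integral_mono (ki s) hi fun y => ?_
      simp only [BoundedContinuousFunction.coe_ofNormedAddCommGroup]
      by_cases hy : y ∈ closedBall x s
      · rw [indicator_of_mem hy]
        refine le_max_of_le_right (le_min le_rfl ?_)
        rw [le_div_iff₀ hts]
        have := mem_closedBall.1 hy
        linarith
      · rw [indicator_of_notMem hy]
        exact le_max_left _ _
    · refine integral_mono hi (ki t) fun y => ?_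
      simp only [BoundedContinuousFunction.coe_ofNormedAddCommGroup]
      by_cases hy : y ∈ closedBall x t
      · rw [indicator_of_mem hy]
        exact max_le zero_le_one (min_le_left _ _)
      · rw [indicator_of_notMem hy]
        refine max_le le_rfl (min_le_of_right_le ?_)
        rw [mem_closedBall, not_le] at hy
        exact div_nonpos_of_nonpos_of_nonneg (by linarith) hts.le

lemma tendsto_closedBall_aux {X : Type*} [PseudoMetricSpace X] [MeasurableSpace X] [BorelSpace X]
    (x : X) (r : ℝ) (ν : Measure X) [IsFiniteMeasure ν] :
    Tendsto (fun t => (ν (closedBall x t)).toReal) (𝓝[>] r) (𝓝 (ν (closedBall x r)).toReal) := by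
  refine (ENNReal.tendsto_toReal (measure_ne_top _ _)).comp ?_
  have h := tendsto_measure_biInter_gt (μ := ν) (s := fun t => closedBall x t) (a := r)
    (fun t _ => isClosed_closedBall.measurableSet.nullMeasurableSet)
    (fun i j _ hij => closedBall_subset_closedBall hij) ⟨r + 1, by simp, measure_ne_top _ _⟩
  have e : (⋂ t > r, closedBall x t) = closedBall x r := by
    ext y
    simp only [mem_iInter, mem_closedBall]
    exact ⟨fun h => le_of_forall_gt_imp_ge_of_dense h, fun h t ht => h.trans ht.le⟩
  rwa [e] at h

/-- The `(a, r₀)`-monotonicity property (for every `x` the function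
`r ↦ e^{a r} r^{4-n} ν(closedBall x r)` is nondecreasing on `(0, r₀]`) passes from a
weakly convergent sequence of finite Borel measures on `ℝⁿ` to its weak limit. -/
theorem monotonicity_passes_to_weak_limit
    (n : ℕ) (hn : 4 ≤ n) (a : ℝ) (ha : 0 ≤ a) (r₀ : ℝ) (hr₀ : 0 < r₀)
    (μs : ℕ → Measure (EuclideanSpace ℝ (Fin n))) (μ : Measure (EuclideanSpace ℝ (Fin n)))
    [∀ i, IsFiniteMeasure (μs i)] [IsFiniteMeasure μ]
    (hmono : ∀ i, ∀ x : EuclideanSpace ℝ (Fin n),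
      MonotoneOn
        (fun r : ℝ => Real.exp (a * r) * r ^ ((4 : ℝ) - n) * (μs i (closedBall x r)).toReal)
        (Ioc (0 : ℝ) r₀))
    (hweak : ∀ f : EuclideanSpace ℝ (Fin n) →ᵇ ℝ,
      Tendsto (fun i => ∫ y, f y ∂(μs i)) atTop (𝓝 (∫ y, f y ∂μ))) :
    ∀ x : EuclideanSpace ℝ (Fin n),
      MonotoneOn
        (fun r : ℝ => Real.exp (a * r) * r ^ ((4 : ℝ) - n) * (μ (closedBall x r)).toReal)
        (Ioc (0 : ℝ) r₀) := by
  intro x s hs r hr hsr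
  rcases hsr.eq_or_lt with rfl | hlt
  · exact le_rfl
  set φ : ℝ → ℝ := fun r => Real.exp (a * r) * r ^ ((4 : ℝ) - n) with hφ
  have hφ0 : ∀ u, 0 < u → 0 ≤ φ u := fun u hu =>
    mul_nonneg (Real.exp_pos _).le (Real.rpow_nonneg hu.le _)
  have main : ∀ s', s < s' → s' < r → ∀ t, r < t →
      φ s' * (μ (closedBall x s)).toReal ≤ φ r * (μ (closedBall x t)).toReal := by
    intro s' h1 h2 t h3
    obtain ⟨f, hf⟩ := exists_cutoff_aux x h1
    obtain ⟨g, hg⟩ := exists_cutoff_aux x h3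
    have hs'0 : 0 < s' := hs.1.trans h1
    have hlim : φ s' * ∫ y, f y ∂μ ≤ φ r * ∫ y, g y ∂μ := by
      refine le_of_tendsto_of_tendsto' ((hweak f).const_mul _) ((hweak g).const_mul _) fun i => ?_
      calc φ s' * ∫ y, f y ∂(μs i) ≤ φ s' * (μs i (closedBall x s')).toReal :=
            mul_le_mul_of_nonneg_left (hf _ inferInstance).2 (hφ0 _ hs'0)
        _ ≤ φ r * (μs i (closedBall x r)).toReal :=
            hmono i x ⟨hs'0, h2.le.trans hr.2⟩ hr h2.le
        _ ≤ _ := mul_le_mul_of_nonneg_left (hg _ inferInstance).1 (hφ0 _ hr.1)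
    exact (mul_le_mul_of_nonneg_left (hf μ inferInstance).1 (hφ0 _ hs'0)).trans
      (hlim.trans (mul_le_mul_of_nonneg_left (hg μ inferInstance).2 (hφ0 _ hr.1)))
  have main2 : ∀ s', s < s' → s' < r →
      φ s' * (μ (closedBall x s)).toReal ≤ φ r * (μ (closedBall x r)).toReal := by
    intro s' h1 h2
    refine ge_of_tendsto ((tendsto_closedBall_aux x r μ).const_mul (φ r)) ?_
    filter_upwards [self_mem_nhdsWithin] with t ht using main s' h1 h2 t ht
  have hcont : ContinuousAt φ s := by
    refine ContinuousAt.mul (by fun_prop) ?_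
    exact Real.continuousAt_rpow_const _ _ (Or.inl hs.1.ne')
  have hT : Tendsto (fun u => φ u * (μ (closedBall x s)).toReal) (𝓝[>] s)
      (𝓝 (φ s * (μ (closedBall x s)).toReal)) :=
    (hcont.tendsto.mono_left nhdsWithin_le_nhds).mul_const _
  refine le_of_tendsto hT ?_
  filter_upwards [Ioo_mem_nhdsGT hlt] with u hu using main2 u hu.1 hu.2
end

section
/- Let n ≥ 4, a ≥ 0, r₀ > 0, and let μ_i be a sequence of finite Borel measures on Euclidean space ℝⁿ, each satisfying the (a,r₀)-monotonicity property, converging weakly to a finite Borel measure μ. Then for every x ∈ ℝⁿ the limit lim_{r→0⁺} ( liminf_{i→∞} r^{4−n} μ_i(closedBall x r) ) exists and equals the density Θ^{n−4}(μ, x) := lim_{r→0⁺} r^{4−n} μ(closedBall x r). In particular, for every ε > 0 the set { x : lim_{r→0⁺} liminf_{i→∞} r^{4−n} μ_i(closedBall x r) ≥ ε } coincides with { x : Θ^{n−4}(μ, x) ≥ ε }. -/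
open MeasureTheory Metric Filter Set
open scoped Topology ENNReal BoundedContinuousFunction

theorem aux_cutoff {E : Type*} [MetricSpace E] [MeasurableSpace E] [BorelSpace E] (x : E)
    {s r : ℝ} (hsr : s < r) : ∃ f : E →ᵇ ℝ, ∀ ν : Measure E, IsFiniteMeasure ν →
      (ν (closedBall x s)).toReal ≤ ∫ y, f y ∂ν ∧ ∫ y, f y ∂ν ≤ (ν (closedBall x r)).toReal := by
  have hc : Continuous (fun y : E => max 0 (min 1 ((r - dist y x) / (r - s)))) := by fun_prop
  let f : E →ᵇ ℝ := BoundedContinuousFunction.ofNormedAddCommGroup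
    (fun y : E => max 0 (min 1 ((r - dist y x) / (r - s)))) hc 1 (by
      intro y
      rw [Real.norm_of_nonneg (le_max_left _ _)]
      exact max_le zero_le_one (min_le_left _ _))
  have hf : ∀ y, f y = max 0 (min 1 ((r - dist y x) / (r - s))) := fun y => rfl
  have hrs : 0 < r - s := by linarith
  refine ⟨f, fun ν hν => ?_⟩
  have hind : ∀ t : ℝ, (ν (closedBall x t)).toReal
      = ∫ y, (closedBall x t).indicator (fun _ => (1 : ℝ)) y ∂ν := by
    intro t
    rw [integral_indicator_const _ measurableSet_closedBall]
    simp [Measure.real]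
  have hint : ∀ t : ℝ, Integrable ((closedBall x t).indicator (fun _ => (1 : ℝ))) ν := fun t =>
    (integrable_const _).indicator measurableSet_closedBall
  constructor
  · rw [hind]
    refine integral_mono (hint s) (f.integrable ν) fun y => ?_
    by_cases hy : y ∈ closedBall x s
    · rw [indicator_of_mem hy, hf]
      have : 1 ≤ (r - dist y x) / (r - s) := by
        rw [le_div_iff₀ hrs]
        have := mem_closedBall.1 hy
        linarith
      simp [this]
    · rw [indicator_of_notMem hy, hf]
      exact le_max_left _ _
  · rw [hind]
    refine integral_mono (f.integrable ν) (hint r) fun y => ?_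
    by_cases hy : y ∈ closedBall x r
    · rw [indicator_of_mem hy, hf]
      exact max_le zero_le_one (min_le_left _ _)
    · rw [indicator_of_notMem hy, hf]
      have h1 : (r - dist y x) / (r - s) ≤ 0 := by
        have : r < dist y x := by simpa using hy
        exact div_nonpos_of_nonpos_of_nonneg (by linarith) hrs.le
      exact max_le le_rfl ((min_le_right _ _).trans h1)

/-- abstract real-variable version -/
theorem aux_real (p a r₀ : ℝ) (hr₀ : 0 < r₀) (ms : ℕ → ℝ → ℝ) (m : ℝ → ℝ)
    (hm0 : ∀ r, 0 ≤ m r) (hms0 : ∀ i r, 0 ≤ ms i r)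
    (hmono : ∀ i, MonotoneOn (fun r : ℝ => Real.exp (a * r) * r ^ p * ms i r) (Ioc 0 r₀))
    (hup : ∀ s r : ℝ, s < r → ∀ δ > 0, ∀ᶠ i in atTop, ms i s ≤ m r + δ)
    (hlo : ∀ s r : ℝ, s < r → ∀ δ > 0, ∀ᶠ i in atTop, m s ≤ ms i r + δ) :
    ∃ L : ℝ, Tendsto (fun r : ℝ => r ^ p * m r) (𝓝[>] (0 : ℝ)) (𝓝 L) ∧
      Tendsto (fun r : ℝ => liminf (fun i => r ^ p * ms i r) atTop) (𝓝[>] (0 : ℝ)) (𝓝 L) := by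
  set w : ℝ → ℝ := fun r => Real.exp (a * r) * r ^ p with hw
  have wpos : ∀ r, 0 < r → 0 < w r := fun r hr => by
    have := Real.rpow_pos_of_pos hr p
    positivity
  have wcont : ∀ r, 0 < r → ContinuousAt w r := fun r hr => by
    have : ContinuousAt (fun r : ℝ => r ^ p) r := Real.continuousAt_rpow_const _ _ (Or.inl hr.ne')
    exact (by fun_prop : ContinuousAt (fun r : ℝ => Real.exp (a * r)) r).mul this
  -- monotonicity of the limit
  have hG : MonotoneOn (fun r => w r * m r) (Ioc 0 r₀) := by
    intro s hs t ht hst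
    rcases hst.eq_or_lt with rfl | hst
    · exact le_rfl
    have key : ∀ s' t', s < s' → s' < t' → t' < t → w s' * m s ≤ w t' * m t := by
      intro s' t' h1 h2 h3
      have hs' : 0 < s' := hs.1.trans h1
      have ht' : 0 < t' := hs'.trans h2
      have hw1 := wpos s' hs'
      have hw2 := wpos t' ht'
      refine le_of_forall_pos_le_add fun η hη => ?_
      set δ := η / (w s' + w t') with hδ
      have hδ0 : 0 < δ := by positivity
      obtain ⟨i, hi1, hi2⟩ := ((hlo s s' h1 δ hδ0).and (hup t' t h3 δ hδ0)).exists
      have hi3 : w s' * ms i s' ≤ w t' * ms i t' :=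
        hmono i ⟨hs', (h2.trans h3).le.trans ht.2⟩ ⟨ht', h3.le.trans ht.2⟩ h2.le
      have e : δ * (w s' + w t') = η := by rw [hδ]; field_simp
      nlinarith [mul_le_mul_of_nonneg_left hi1 hw1.le, mul_le_mul_of_nonneg_left hi2 hw2.le]
    have hε : Tendsto (fun ε : ℝ => w (s + ε) * m s) (𝓝[>] 0) (𝓝 (w s * m s)) := by
      have h : Tendsto (fun ε : ℝ => s + ε) (𝓝[>] 0) (𝓝 s) := by
        have : Tendsto (fun ε : ℝ => s + ε) (𝓝 0) (𝓝 (s + 0)) := Continuous.tendsto (by fun_prop) 0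
        rw [add_zero] at this
        exact this.mono_left nhdsWithin_le_nhds
      exact ((wcont s hs.1).tendsto.comp h).mul_const _
    have hε' : Tendsto (fun ε : ℝ => w (t - ε) * m t) (𝓝[>] 0) (𝓝 (w t * m t)) := by
      have h : Tendsto (fun ε : ℝ => t - ε) (𝓝[>] 0) (𝓝 t) := by
        have : Tendsto (fun ε : ℝ => t - ε) (𝓝 0) (𝓝 (t - 0)) := Continuous.tendsto (by fun_prop) 0
        rw [sub_zero] at this
        exact this.mono_left nhdsWithin_le_nhds
      exact ((wcont t ht.1).tendsto.comp h).mul_const _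
    refine le_of_tendsto_of_tendsto hε hε' ?_
    have : Ioo (0:ℝ) ((t - s) / 2) ∈ 𝓝[>] (0:ℝ) := Ioo_mem_nhdsGT (by linarith)
    filter_upwards [this] with ε hε
    exact key _ _ (by linarith [hε.1]) (by linarith [hε.2]) (by linarith [hε.1])
  have hGlim : ∃ L, Tendsto (fun r => w r * m r) (𝓝[>] 0) (𝓝 L) := by
    have h1 : MonotoneOn (fun r => w r * m r) (Ioo 0 r₀) := hG.mono Ioo_subset_Ioc_self
    have := h1.tendsto_nhdsWithin_Ioo_right (nonempty_Ioo.2 hr₀) ⟨0, by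
      rintro _ ⟨r, hr, rfl⟩
      exact mul_nonneg (wpos r hr.1).le (hm0 r)⟩
    exact ⟨_, this⟩
  obtain ⟨L, hL⟩ := hGlim
  have hD : Tendsto (fun r : ℝ => r ^ p * m r) (𝓝[>] (0 : ℝ)) (𝓝 L) := by
    have he : Tendsto (fun r : ℝ => Real.exp (-(a * r))) (𝓝[>] 0) (𝓝 1) := by
      have : Tendsto (fun r : ℝ => Real.exp (-(a * r))) (𝓝 0) (𝓝 (Real.exp (-(a * 0)))) :=
        Continuous.tendsto (by fun_prop) 0
      simp only [mul_zero, neg_zero, Real.exp_zero] at this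
      exact this.mono_left nhdsWithin_le_nhds
    have := he.mul hL
    rw [one_mul] at this
    refine this.congr fun r => ?_
    simp only [hw]
    rw [Real.exp_neg]
    have := Real.exp_pos (a * r)
    field_simp
  refine ⟨L, hD, ?_⟩
  have hscale : ∀ c : ℝ, Tendsto (fun r : ℝ => r ^ p * m (r * (1 + c * r))) (𝓝[>] 0) (𝓝 L) := by
    intro c
    have h1 : Tendsto (fun r : ℝ => 1 + c * r) (𝓝[>] 0) (𝓝 1) := by
      have : Tendsto (fun r : ℝ => 1 + c * r) (𝓝 0) (𝓝 (1 + c * 0)) :=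
        Continuous.tendsto (by fun_prop) 0
      simp only [mul_zero, add_zero] at this
      exact this.mono_left nhdsWithin_le_nhds
    have hpos : ∀ᶠ r : ℝ in 𝓝[>] 0, 0 < 1 + c * r := h1.eventually (lt_mem_nhds one_pos)
    have hid : Tendsto (fun r : ℝ => r) (𝓝[>] 0) (𝓝 0) := tendsto_id.mono_left nhdsWithin_le_nhds
    have h2 : Tendsto (fun r : ℝ => r * (1 + c * r)) (𝓝[>] 0) (𝓝[>] 0) := by
      refine tendsto_nhdsWithin_iff.2 ⟨by simpa using hid.mul h1, ?_⟩
      filter_upwards [hpos, self_mem_nhdsWithin] with r hr hr0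
      exact mul_pos hr0 hr
    have h3 : Tendsto (fun r : ℝ => (1 + c * r) ^ (-p)) (𝓝[>] 0) (𝓝 1) := by
      have := h1.rpow_const (p := -p) (Or.inl one_ne_zero)
      simpa using this
    have h4 := h3.mul (hD.comp h2)
    rw [one_mul] at h4
    refine h4.congr' ?_
    filter_upwards [hpos, self_mem_nhdsWithin] with r hr hr0
    have hr0 : 0 < r := hr0
    simp only [Function.comp]
    rw [Real.mul_rpow hr0.le hr.le, Real.rpow_neg hr.le]
    have := Real.rpow_pos_of_pos hr p
    field_simp
  have hbdd : ∀ r : ℝ, 0 < r → IsBoundedUnder (· ≤ ·) atTop (fun i => r ^ p * ms i r) := by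
    intro r hr
    refine ⟨r ^ p * (m (r + 1) + 1), ?_⟩
    rw [eventually_map]
    filter_upwards [hup r (r + 1) (by linarith) 1 one_pos] with i hi
    exact mul_le_mul_of_nonneg_left hi (Real.rpow_nonneg hr.le p)
  have hbdd' : ∀ r : ℝ, 0 < r → IsBoundedUnder (· ≥ ·) atTop (fun i => r ^ p * ms i r) := by
    intro r hr
    refine ⟨0, ?_⟩
    rw [eventually_map]
    exact Eventually.of_forall fun i => mul_nonneg (Real.rpow_nonneg hr.le p) (hms0 i r)
  refine tendsto_of_tendsto_of_tendsto_of_le_of_le' (hscale (-1)) (hscale 1) ?_ ?_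
  · filter_upwards [self_mem_nhdsWithin] with r hr
    have hr : 0 < r := hr
    have hp := Real.rpow_pos_of_pos hr p
    refine le_of_forall_pos_le_add fun η hη => ?_
    rw [← sub_le_iff_le_add]
    refine le_liminf_of_le (hbdd r hr).isCoboundedUnder_ge ?_
    filter_upwards [hlo (r * (1 + -1 * r)) r (by nlinarith) (η / r ^ p) (by positivity)] with i hi
    have := mul_le_mul_of_nonneg_left hi hp.le
    have e : r ^ p * (η / r ^ p) = η := by field_simp
    rw [mul_add (r ^ p) _ (η / r ^ p), e] at this
    linarith
  · filter_upwards [self_mem_nhdsWithin] with r hr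
    have hr : 0 < r := hr
    have hp := Real.rpow_pos_of_pos hr p
    refine le_of_forall_pos_le_add fun η hη => ?_
    refine liminf_le_of_frequently_le (Eventually.frequently ?_) (hbdd' r hr)
    filter_upwards [hup r (r * (1 + 1 * r)) (by nlinarith) (η / r ^ p) (by positivity)] with i hi
    have := mul_le_mul_of_nonneg_left hi hp.le
    have e : r ^ p * (η / r ^ p) = η := by field_simp
    rw [mul_add (r ^ p) _ (η / r ^ p), e] at this
    linarith

/-- If finite Borel measures `μᵢ` on `ℝⁿ`, each satisfying the
`(a, r₀)`-monotonicity property, converge weakly to `μ`, then at every point `x` the limit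
`lim_{r → 0⁺} (liminf_i r^{4-n} μᵢ(closedBall x r))` exists and equals the density
`Θ^{n-4}(μ, x) = lim_{r → 0⁺} r^{4-n} μ(closedBall x r)`; consequently, for every `ε > 0`,
the set where the former limit exists and is `≥ ε` coincides with `{x | Θ^{n-4}(μ, x) ≥ ε}`. -/
theorem bubbling_set_recovered_from_limit_measure
    (n : ℕ) (hn : 4 ≤ n) (a : ℝ) (ha : 0 ≤ a) (r₀ : ℝ) (hr₀ : 0 < r₀)
    (μs : ℕ → Measure (EuclideanSpace ℝ (Fin n))) (μ : Measure (EuclideanSpace ℝ (Fin n)))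
    [∀ i, IsFiniteMeasure (μs i)] [IsFiniteMeasure μ]
    (hmono : ∀ i, ∀ x : EuclideanSpace ℝ (Fin n),
      MonotoneOn
        (fun r : ℝ => Real.exp (a * r) * r ^ ((4 : ℝ) - n) * (μs i (closedBall x r)).toReal)
        (Ioc (0 : ℝ) r₀))
    (hweak : ∀ f : EuclideanSpace ℝ (Fin n) →ᵇ ℝ,
      Tendsto (fun i => ∫ y, f y ∂(μs i)) atTop (𝓝 (∫ y, f y ∂μ))) :
    ∃ Θ : EuclideanSpace ℝ (Fin n) → ℝ,
      (∀ x,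
        Tendsto (fun r : ℝ => r ^ ((4 : ℝ) - n) * (μ (closedBall x r)).toReal)
          (𝓝[>] (0 : ℝ)) (𝓝 (Θ x)) ∧
        Tendsto
          (fun r : ℝ =>
            liminf (fun i => r ^ ((4 : ℝ) - n) * (μs i (closedBall x r)).toReal) atTop)
          (𝓝[>] (0 : ℝ)) (𝓝 (Θ x))) ∧
      (∀ ε : ℝ, 0 < ε →
        {x : EuclideanSpace ℝ (Fin n) |
            ∃ L : ℝ,
              Tendsto
                (fun r : ℝ =>
                  liminf (fun i => r ^ ((4 : ℝ) - n) * (μs i (closedBall x r)).toReal) atTop)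
                (𝓝[>] (0 : ℝ)) (𝓝 L) ∧ ε ≤ L}
          = {x : EuclideanSpace ℝ (Fin n) | ε ≤ Θ x}) := by
  have key : ∀ x : EuclideanSpace ℝ (Fin n), ∃ L : ℝ,
      Tendsto (fun r : ℝ => r ^ ((4 : ℝ) - n) * (μ (closedBall x r)).toReal)
          (𝓝[>] (0 : ℝ)) (𝓝 L) ∧
        Tendsto
          (fun r : ℝ =>
            liminf (fun i => r ^ ((4 : ℝ) - n) * (μs i (closedBall x r)).toReal) atTop)
          (𝓝[>] (0 : ℝ)) (𝓝 L) := by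
    intro x
    refine aux_real ((4 : ℝ) - n) a r₀ hr₀ (fun i r => (μs i (closedBall x r)).toReal)
      (fun r => (μ (closedBall x r)).toReal) (fun _ => ENNReal.toReal_nonneg)
      (fun _ _ => ENNReal.toReal_nonneg) (fun i => hmono i x) ?_ ?_
    · intro s r hsr δ hδ
      obtain ⟨f, hf⟩ := aux_cutoff x hsr
      have h1 := (hweak f).eventually (gt_mem_nhds (lt_add_of_pos_right _ hδ))
      filter_upwards [h1] with i hi
      linarith [(hf (μs i) inferInstance).1, (hf μ inferInstance).2]
    · intro s r hsr δ hδ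
      obtain ⟨f, hf⟩ := aux_cutoff x hsr
      have h1 := (hweak f).eventually (lt_mem_nhds (sub_lt_self _ hδ))
      filter_upwards [h1] with i hi
      linarith [(hf (μs i) inferInstance).2, (hf μ inferInstance).1]
  choose Θ hΘ using key
  refine ⟨Θ, hΘ, fun ε _ => ?_⟩
  ext x
  constructor
  · rintro ⟨L, hL, hε⟩
    have := tendsto_nhds_unique hL (hΘ x).2
    exact hε.trans_eq this
  · intro h
    exact ⟨Θ x, (hΘ x).2, h⟩
end

section
/- Let n ≥ 4, a ≥ 0, r₀ > 0 and ε > 0. Let μ_i be a sequence of finite Borel measures on Euclidean space ℝⁿ, each satisfying the (a,r₀)-monotonicity property, converging weakly to a finite Borel measure μ. Let x_i → x in ℝⁿ be points with Θ^{n−4}(μ_i, x_i) ≥ ε for every i (these densities exist by monotonicity). Then the density Θ^{n−4}(μ, x) := lim_{r→0⁺} r^{4−n} μ(closedBall x r) exists and Θ^{n−4}(μ, x) ≥ ε. -/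
open MeasureTheory Metric Filter Set
open scoped Topology ENNReal BoundedContinuousFunction

lemma aux_bump {n : ℕ} (x : EuclideanSpace ℝ (Fin n)) (r s : ℝ) (hrs : r < s) :
    ∃ f : EuclideanSpace ℝ (Fin n) →ᵇ ℝ, ∀ (ν : Measure (EuclideanSpace ℝ (Fin n)))
      [IsFiniteMeasure ν], (ν (closedBall x r)).toReal ≤ ∫ y, f y ∂ν ∧
        ∫ y, f y ∂ν ≤ (ν (closedBall x s)).toReal := by
  have hpos : 0 < s - r := by linarith
  let g : EuclideanSpace ℝ (Fin n) → ℝ := fun y => max 0 (min 1 ((s - dist y x) / (s - r)))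
  have hg0 : ∀ y, 0 ≤ g y := fun y => le_max_left _ _
  have hg1 : ∀ y, g y ≤ 1 := fun y => max_le zero_le_one (min_le_left _ _)
  have hgc : Continuous g := by
    simp only [g]
    fun_prop
  let f : EuclideanSpace ℝ (Fin n) →ᵇ ℝ := BoundedContinuousFunction.ofNormedAddCommGroup g hgc 1
    (fun y => by rw [Real.norm_eq_abs, abs_of_nonneg (hg0 y)]; exact hg1 y)
  refine ⟨f, fun ν _ => ?_⟩
  have hf : Integrable (fun y => f y) ν := f.integrable ν
  have hfg : ∀ y, f y = g y := fun y => rfl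
  have hi : ∀ t, ∫ y, (closedBall x t).indicator (fun _ => (1:ℝ)) y ∂ν
      = (ν (closedBall x t)).toReal := by
    intro t
    rw [integral_indicator measurableSet_closedBall]
    simp [Measure.real]
  have hii : ∀ t, Integrable ((closedBall x t).indicator (fun _ => (1:ℝ))) ν := fun t =>
    (integrable_const _).indicator measurableSet_closedBall
  constructor
  · rw [← hi]
    refine integral_mono (hii r) hf fun y => ?_
    by_cases hy : y ∈ closedBall x r
    · rw [indicator_of_mem hy]
      rw [mem_closedBall] at hy
      refine le_max_of_le_right (le_min le_rfl ?_)
      rw [le_div_iff₀ hpos]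
      linarith
    · rw [indicator_of_notMem hy]
      exact hg0 y
  · rw [← hi]
    refine integral_mono hf (hii s) fun y => ?_
    by_cases hy : y ∈ closedBall x s
    · rw [indicator_of_mem hy]
      exact hg1 y
    · rw [indicator_of_notMem hy]
      rw [mem_closedBall, not_le] at hy
      refine max_le le_rfl (min_le_of_right_le ?_)
      exact div_nonpos_of_nonpos_of_nonneg (by linarith) hpos.le

lemma aux_right {n : ℕ} (x : EuclideanSpace ℝ (Fin n)) (s : ℝ)
    (ν : Measure (EuclideanSpace ℝ (Fin n))) [IsFiniteMeasure ν] :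
    Tendsto (fun r => (ν (closedBall x r)).toReal) (𝓝[>] s)
      (𝓝 (ν (closedBall x s)).toReal) := by
  have h := tendsto_measure_biInter_gt (μ := ν) (s := fun r => closedBall x r) (a := s)
    (fun r _ => measurableSet_closedBall.nullMeasurableSet)
    (fun i j _ hij => closedBall_subset_closedBall hij)
    ⟨s + 1, by linarith, measure_ne_top _ _⟩
  have he : (⋂ r, ⋂ (_ : r > s), closedBall x r) = closedBall x s := by
    ext y
    simp only [mem_iInter, mem_closedBall]
    exact ⟨fun h => le_of_forall_gt_imp_ge_of_dense h, fun h r hr => h.trans hr.le⟩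
  rw [he] at h
  exact (ENNReal.tendsto_toReal (measure_ne_top _ _)).comp h

/-- Let `μᵢ` be finite Borel measures on `ℝⁿ` satisfying the
`(a, r₀)`-monotonicity property and converging weakly to `μ`, and let `xᵢ → x` with
`Θ^{n-4}(μᵢ, xᵢ) ≥ ε` for all `i` (the densities exist by monotonicity). Then the density
`Θ^{n-4}(μ, x) = lim_{r → 0⁺} r^{4-n} μ(closedBall x r)` exists and is `≥ ε`:
bubbling points can only accumulate at bubbling points of the limit measure. -/
theorem bubbling_points_accumulate
    (n : ℕ) (hn : 4 ≤ n) (a : ℝ) (ha : 0 ≤ a) (r₀ : ℝ) (hr₀ : 0 < r₀) (ε : ℝ) (hε : 0 < ε)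
    (μs : ℕ → Measure (EuclideanSpace ℝ (Fin n))) (μ : Measure (EuclideanSpace ℝ (Fin n)))
    [∀ i, IsFiniteMeasure (μs i)] [IsFiniteMeasure μ]
    (hmono : ∀ i, ∀ x : EuclideanSpace ℝ (Fin n),
      MonotoneOn
        (fun r : ℝ => Real.exp (a * r) * r ^ ((4 : ℝ) - n) * (μs i (closedBall x r)).toReal)
        (Ioc (0 : ℝ) r₀))
    (hweak : ∀ f : EuclideanSpace ℝ (Fin n) →ᵇ ℝ,
      Tendsto (fun i => ∫ y, f y ∂(μs i)) atTop (𝓝 (∫ y, f y ∂μ)))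
    (xs : ℕ → EuclideanSpace ℝ (Fin n)) (x : EuclideanSpace ℝ (Fin n))
    (hx : Tendsto xs atTop (𝓝 x))
    (hdens : ∀ i, ∃ Θi : ℝ,
      Tendsto (fun r : ℝ => r ^ ((4 : ℝ) - n) * (μs i (closedBall (xs i) r)).toReal)
        (𝓝[>] (0 : ℝ)) (𝓝 Θi) ∧ ε ≤ Θi) :
    ∃ Θ : ℝ,
      Tendsto (fun r : ℝ => r ^ ((4 : ℝ) - n) * (μ (closedBall x r)).toReal)
        (𝓝[>] (0 : ℝ)) (𝓝 Θ) ∧ ε ≤ Θ := by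
  set h : ℝ → ℝ := fun r => Real.exp (a * r) * r ^ ((4 : ℝ) - n) with hh
  set m : ℝ → ℝ := fun r => (μ (closedBall x r)).toReal with hm
  have hhpos : ∀ r, 0 < r → 0 < h r := fun r hr => by
    simp only [hh]; positivity
  have hhc : ∀ r, 0 < r → ContinuousAt h r := fun r hr => by
    refine ContinuousAt.mul (by fun_prop) ?_
    exact Real.continuousAt_rpow_const _ _ (Or.inl hr.ne')
  have hA : ∀ r s, r < s → ∀ δ > 0, ∀ᶠ i in atTop,
      (μs i (closedBall x r)).toReal ≤ m s + δ := by
    intro r s hrs δ hδ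
    obtain ⟨f, hf⟩ := aux_bump x r s hrs
    filter_upwards [(hweak f).eventually_lt_const
      (show ∫ y, f y ∂μ < m s + δ from lt_of_le_of_lt (hf μ).2 (by linarith))] with i hi
    exact (hf (μs i)).1.trans hi.le
  have hB : ∀ r s, r < s → ∀ δ > 0, ∀ᶠ i in atTop,
      m r ≤ (μs i (closedBall x s)).toReal + δ := by
    intro r s hrs δ hδ
    obtain ⟨f, hf⟩ := aux_bump x r s hrs
    filter_upwards [(hweak f).eventually_const_lt
      (show m r - δ < ∫ y, f y ∂μ from lt_of_lt_of_le (by linarith) (hf μ).1)] with i hi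
    linarith [(hf (μs i)).2]
  have hmonoμ : MonotoneOn (fun r => h r * m r) (Ioo 0 r₀) := by
    intro r hr s hs hrs
    rcases hrs.eq_or_lt with rfl | hlt
    · exact le_rfl
    have h1 : ∀ r' ∈ Ioo r s, ∀ s' ∈ Ioi s, h r' * m r ≤ h s * m s' := by
      intro r' hr' s' hs'
      have hr'0 : 0 < r' := hr.1.trans hr'.1
      have h2 : ∀ δ > 0, h r' * m r ≤ h s * m s' + δ * (h r' + h s) := by
        intro δ hδ
        obtain ⟨i, hi1, hi2⟩ := ((hA s s' hs' δ hδ).and (hB r r' hr'.1 δ hδ)).exists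
        have h3 := hmono i x (a := r') ⟨hr'0, hr'.2.le.trans hs.2.le⟩ ⟨hs.1, hs.2.le⟩ hr'.2.le
        change h r' * _ ≤ h s * _ at h3
        have h4 := mul_le_mul_of_nonneg_left hi1 (hhpos s hs.1).le
        have h5 := mul_le_mul_of_nonneg_left hi2 (hhpos r' hr'0).le
        linarith
      have hc : 0 < h r' + h s := add_pos (hhpos _ hr'0) (hhpos _ hs.1)
      refine le_of_forall_pos_le_add fun η hη => ?_
      have := h2 (η / (h r' + h s)) (by positivity)
      rwa [div_mul_cancel₀ _ hc.ne'] at this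
    have h6 : ∀ r' ∈ Ioo r s, h r' * m r ≤ h s * m s := by
      intro r' hr'
      refine ge_of_tendsto ((aux_right x s μ).const_mul (h s)) ?_
      filter_upwards [self_mem_nhdsWithin] with s' hs'
      exact h1 r' hr' s' hs'
    refine le_of_tendsto (f := fun r' => h r' * m r) (x := 𝓝[>] r)
      (((hhc r hr.1).tendsto.mono_left nhdsWithin_le_nhds).mul_const (m r)) ?_
    filter_upwards [Ioo_mem_nhdsGT hlt] with r' hr'
    exact h6 r' hr'
  have hexp : Tendsto (fun r => Real.exp (a * r)) (𝓝[>] (0:ℝ)) (𝓝 1) := by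
    have : Tendsto (fun r => Real.exp (a * r)) (𝓝 (0:ℝ)) (𝓝 (Real.exp (a * 0))) :=
      (by fun_prop : Continuous fun r => Real.exp (a * r)).tendsto 0
    rw [mul_zero, Real.exp_zero] at this
    exact this.mono_left nhdsWithin_le_nhds
  have hlow : ∀ i, ∀ r ∈ Ioo 0 r₀, ε ≤ h r * (μs i (closedBall (xs i) r)).toReal := by
    intro i r hr
    obtain ⟨Θi, hΘ, hε'⟩ := hdens i
    refine hε'.trans ?_
    have h7 := hexp.mul hΘ
    rw [one_mul] at h7
    refine le_of_tendsto h7 ?_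
    filter_upwards [Ioo_mem_nhdsGT hr.1] with t ht
    have h8 := hmono i (xs i) (a := t) ⟨ht.1, ht.2.le.trans hr.2.le⟩ ⟨hr.1, hr.2.le⟩ ht.2.le
    simp only [hh]
    simp only at h8
    linarith
  have hlowμ : ∀ s ∈ Ioo 0 r₀, ε ≤ h s * m s := by
    intro s hs
    have h9 : ∀ r ∈ Ioo 0 s, ε ≤ h r * m s := by
      intro r hr
      obtain ⟨t, hrt, hts⟩ := exists_between hr.2
      refine le_of_forall_pos_le_add fun η hη => ?_
      have hp := hhpos r hr.1
      have hd : ∀ᶠ i in atTop, dist (xs i) x < t - r :=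
        (Metric.tendsto_nhds.1 hx) (t - r) (by linarith)
      obtain ⟨i, hi1, hi2⟩ := ((hA t s hts (η / h r) (by positivity)).and hd).exists
      have h10 : (μs i (closedBall (xs i) r)).toReal ≤ (μs i (closedBall x t)).toReal := by
        refine ENNReal.toReal_mono (measure_ne_top _ _) (measure_mono ?_)
        exact closedBall_subset_closedBall' (by linarith)
      calc ε ≤ h r * (μs i (closedBall (xs i) r)).toReal := hlow i r ⟨hr.1, hr.2.trans hs.2⟩
        _ ≤ h r * (m s + η / h r) := mul_le_mul_of_nonneg_left (h10.trans hi1) hp.le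
        _ = h r * m s + η := by field_simp
    refine ge_of_tendsto (f := fun r => h r * m s) (x := 𝓝[<] s)
      (((hhc s hs.1).tendsto.mono_left nhdsWithin_le_nhds).mul_const (m s)) ?_
    filter_upwards [Ioo_mem_nhdsLT hs.1] with r hr
    exact h9 r hr
  have hbdd : BddBelow ((fun r => h r * m r) '' Ioo 0 r₀) := by
    refine ⟨ε, ?_⟩
    rintro _ ⟨r, hr, rfl⟩
    exact hlowμ r hr
  have hlim : Tendsto (fun r => h r * m r) (𝓝[>] 0)
      (𝓝 (sInf ((fun r => h r * m r) '' Ioo 0 r₀))) := by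
    have := hmonoμ.tendsto_nhdsWithin_Ioo_right (nonempty_Ioo.2 hr₀) hbdd
    exact this
  refine ⟨sInf ((fun r => h r * m r) '' Ioo 0 r₀), ?_, le_csInf ((nonempty_Ioo.2 hr₀).image _) ?_⟩
  rotate_left
  · rintro _ ⟨r, hr, rfl⟩
    exact hlowμ r hr
  have h11 := hlim.div hexp one_ne_zero
  rw [div_one] at h11
  refine h11.congr fun r => ?_
  simp only [hh, hm, Pi.div_apply]
  field_simp
end

section
/- Let n ≥ 4, a ≥ 0, r₀ > 0, let μ be a finite Borel measure on Euclidean space ℝⁿ, and let x₀ ∈ ℝⁿ be such that r ↦ e^{a r} r^{4−n} μ(closedBall x₀ r) is nondecreasing on (0, r₀]; set Θ := lim_{r→0⁺} r^{4−n} μ(closedBall x₀ r). Let λ_j → 0⁺ and define the blow-up measures ν_j := λ_j^{4−n} · (T_j)_*μ, where T_j : ℝⁿ → ℝⁿ is T_j(y) = λ_j^{−1}(y − x₀). Suppose the ν_j converge vaguely to a Borel measure η that is finite on compact sets, i.e. ∫ f dν_j → ∫ f dη for every continuous compactly supported f : ℝⁿ → ℝ. Then η(closedBall 0 σ) = Θ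 · σ^{n−4} for every σ > 0; in particular σ^{4−n} η(closedBall 0 σ) is independent of σ and equals the density Θ of μ at x₀. -/
open MeasureTheory Metric Filter Set
open scoped Topology ENNReal

theorem cutoff_aux {n : ℕ} (s t : ℝ) (hst : s < t) :
    ∃ f : EuclideanSpace ℝ (Fin n) → ℝ, Continuous f ∧ HasCompactSupport f ∧
      ∀ ν : Measure (EuclideanSpace ℝ (Fin n)), IsFiniteMeasureOnCompacts ν →
        (ν (closedBall 0 s)).toReal ≤ ∫ y, f y ∂ν ∧
        ∫ y, f y ∂ν ≤ (ν (closedBall 0 t)).toReal := by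
  have hts : 0 < t - s := sub_pos.2 hst
  let f : EuclideanSpace ℝ (Fin n) → ℝ := fun y => max 0 (min 1 ((t - ‖y‖) / (t - s)))
  have hf : Continuous f := by
    dsimp only [f]
    fun_prop
  have h0 : ∀ y, y ∉ closedBall (0 : EuclideanSpace ℝ (Fin n)) t → f y = 0 := by
    intro y hy
    rw [mem_closedBall_zero_iff, not_le] at hy
    apply max_eq_left
    exact (min_le_right _ _).trans (div_nonpos_of_nonpos_of_nonneg (by linarith) hts.le)
  have h1 : ∀ y, y ∈ closedBall (0 : EuclideanSpace ℝ (Fin n)) s → f y = 1 := by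
    intro y hy
    rw [mem_closedBall_zero_iff] at hy
    have : 1 ≤ (t - ‖y‖) / (t - s) := by
      rw [le_div_iff₀ hts]; linarith
    simp [f, min_eq_left this]
  have hn : ∀ y, 0 ≤ f y := fun y => le_max_left _ _
  have hl : ∀ y, f y ≤ 1 := fun y => max_le zero_le_one (min_le_left _ _)
  have hc : HasCompactSupport f := HasCompactSupport.intro (isCompact_closedBall 0 t) h0
  refine ⟨f, hf, hc, fun ν hν => ?_⟩
  have hi : Integrable f ν := hf.integrable_of_hasCompactSupport hc
  have key : ∀ r, Integrable ((closedBall (0 : EuclideanSpace ℝ (Fin n)) r).indicator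
      (fun _ => (1 : ℝ))) ν := fun r =>
    (integrable_indicator_iff measurableSet_closedBall).2
      (integrableOn_const (isCompact_closedBall 0 r).measure_lt_top.ne)
  have key2 : ∀ r, ∫ y, (closedBall (0 : EuclideanSpace ℝ (Fin n)) r).indicator
      (fun _ => (1 : ℝ)) y ∂ν = (ν (closedBall 0 r)).toReal := fun r => by
    rw [integral_indicator measurableSet_closedBall]
    simp [Measure.real]
  rw [← key2 s, ← key2 t]
  constructor
  · refine integral_mono (key s) hi fun y => ?_
    by_cases hy : y ∈ closedBall (0 : EuclideanSpace ℝ (Fin n)) s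
    · simp only [indicator_of_mem hy, h1 y hy, le_refl]
    · simp only [indicator_of_notMem hy, hn y]
  · refine integral_mono hi (key t) fun y => ?_
    by_cases hy : y ∈ closedBall (0 : EuclideanSpace ℝ (Fin n)) t
    · simp only [indicator_of_mem hy, hl y]
    · simp only [indicator_of_notMem hy, h0 y hy, le_refl]

/-- tangent cone measures have conical mass ratios. Let `μ` be a finite
Borel measure on `ℝⁿ` whose scaled mass `r ↦ e^{a r} r^{4-n} μ(closedBall x₀ r)` is
nondecreasing on `(0, r₀]`, with density `Θ = lim_{r → 0⁺} r^{4-n} μ(closedBall x₀ r)`.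
If the blow-up measures `ν_j = λ_j^{4-n} (T_j)_* μ`, `T_j(y) = λ_j⁻¹ (y - x₀)`, converge
vaguely (against continuous compactly supported functions) to a measure `η` finite on
compacts, then `η(closedBall 0 σ) = Θ · σ^{n-4}` for every `σ > 0`. -/
theorem tangent_measure_conical_mass
    (n : ℕ) (hn : 4 ≤ n) (a : ℝ) (ha : 0 ≤ a) (r₀ : ℝ) (hr₀ : 0 < r₀)
    (μ : Measure (EuclideanSpace ℝ (Fin n))) [IsFiniteMeasure μ]
    (x₀ : EuclideanSpace ℝ (Fin n))
    (hmono : MonotoneOn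
      (fun r : ℝ => Real.exp (a * r) * r ^ ((4 : ℝ) - n) * (μ (closedBall x₀ r)).toReal)
      (Ioc (0 : ℝ) r₀))
    (Θ : ℝ)
    (hΘ : Tendsto (fun r : ℝ => r ^ ((4 : ℝ) - n) * (μ (closedBall x₀ r)).toReal)
      (𝓝[>] (0 : ℝ)) (𝓝 Θ))
    (lam : ℕ → ℝ) (hlam_pos : ∀ j, 0 < lam j) (hlam : Tendsto lam atTop (𝓝 (0 : ℝ)))
    (η : Measure (EuclideanSpace ℝ (Fin n))) [IsFiniteMeasureOnCompacts η]
    (hvague : ∀ f : EuclideanSpace ℝ (Fin n) → ℝ, Continuous f → HasCompactSupport f →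
      Tendsto
        (fun j => ∫ y, f y
          ∂(ENNReal.ofReal ((lam j) ^ ((4 : ℝ) - n)) •
            Measure.map (fun y : EuclideanSpace ℝ (Fin n) => (lam j)⁻¹ • (y - x₀)) μ))
        atTop (𝓝 (∫ y, f y ∂η))) :
    ∀ σ : ℝ, 0 < σ → (η (closedBall 0 σ)).toReal = Θ * σ ^ ((n : ℝ) - 4) := by
  set ν : ℕ → Measure (EuclideanSpace ℝ (Fin n)) := fun j =>
    ENNReal.ofReal ((lam j) ^ ((4 : ℝ) - n)) •
      Measure.map (fun y : EuclideanSpace ℝ (Fin n) => (lam j)⁻¹ • (y - x₀)) μ with hν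
  have hfin : ∀ j, IsFiniteMeasureOnCompacts (ν j) := fun j => by
    have : IsFiniteMeasure (ν j) := Measure.smul_finite _ ENNReal.ofReal_ne_top
    infer_instance
  have hval : ∀ j σ, (ν j (closedBall 0 σ)).toReal =
      (lam j) ^ ((4 : ℝ) - n) * (μ (closedBall x₀ (lam j * σ))).toReal := by
    intro j σ
    have hp := hlam_pos j
    have hm : Measurable (fun y : EuclideanSpace ℝ (Fin n) => (lam j)⁻¹ • (y - x₀)) := by
      fun_prop
    simp only [hν, Measure.smul_apply, smul_eq_mul, ENNReal.toReal_mul]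
    rw [Measure.map_apply hm measurableSet_closedBall,
      ENNReal.toReal_ofReal (Real.rpow_nonneg hp.le _)]
    congr 3
    ext y
    rw [mem_preimage, mem_closedBall_zero_iff, mem_closedBall, dist_eq_norm, norm_smul,
      norm_inv, Real.norm_of_nonneg hp.le, inv_mul_le_iff₀ hp]
  have hlim : ∀ σ : ℝ, 0 < σ → Tendsto (fun j => (ν j (closedBall 0 σ)).toReal) atTop
      (𝓝 (Θ * σ ^ ((n : ℝ) - 4))) := by
    intro σ hσ
    have h1 : Tendsto (fun j => lam j * σ) atTop (𝓝[>] 0) := by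
      refine tendsto_nhdsWithin_iff.2 ⟨?_, Eventually.of_forall fun j => mul_pos (hlam_pos j) hσ⟩
      simpa using hlam.mul_const σ
    refine ((hΘ.comp h1).mul_const (σ ^ ((n : ℝ) - 4))).congr fun j => ?_
    rw [hval]
    simp only [Function.comp]
    rw [Real.mul_rpow (hlam_pos j).le hσ.le]
    have : σ ^ ((4 : ℝ) - n) * σ ^ ((n : ℝ) - 4) = 1 := by
      rw [← Real.rpow_add hσ]; simp
    linear_combination (lam j ^ ((4 : ℝ) - n) * (μ (closedBall x₀ (lam j * σ))).toReal) * this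
  have hcont : ∀ σ : ℝ, 0 < σ → ContinuousAt (fun r : ℝ => Θ * r ^ ((n : ℝ) - 4)) σ :=
    fun σ hσ => (Real.continuousAt_rpow_const _ _ (Or.inl hσ.ne')).const_mul Θ
  intro σ hσ
  apply le_antisymm
  · refine ge_of_tendsto ((hcont σ hσ).tendsto.mono_left nhdsWithin_le_nhds :
      Tendsto _ (𝓝[>] σ) _) ?_
    filter_upwards [self_mem_nhdsWithin] with t ht
    obtain ⟨f, hf, hc, hb⟩ := cutoff_aux (n := n) σ t ht
    exact (hb η inferInstance).1.trans (le_of_tendsto_of_tendsto' (hvague f hf hc)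
      (hlim t (hσ.trans ht)) fun j => (hb (ν j) (hfin j)).2)
  · refine le_of_tendsto ((hcont σ hσ).tendsto.mono_left nhdsWithin_le_nhds :
      Tendsto _ (𝓝[<] σ) _) ?_
    filter_upwards [Ioo_mem_nhdsLT hσ] with s hs
    obtain ⟨f, hf, hc, hb⟩ := cutoff_aux (n := n) s σ hs.2
    exact (le_of_tendsto_of_tendsto' (hlim s hs.1) (hvague f hf hc)
      fun j => (hb (ν j) (hfin j)).1).trans (hb η inferInstance).2
end

section
/- Let n ≥ 4 and let η be a Borel measure on Euclidean space ℝⁿ that is finite on compact sets. Suppose that for every smooth compactly supported function ψ : ℝⁿ → ℝ one has ∫ ( (n−4)·ψ(x) + ⟨x, ∇ψ(x)⟩ ) dη(x) = 0. Then η is a cone measure of degree n−4: for every λ > 0 and every Borel set E ⊆ ℝⁿ, η({λ·x : x ∈ E}) = λ^{n−4} · η(E). -/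
open MeasureTheory Metric Filter Set
open scoped Topology ENNReal RealInnerProductSpace

lemma aux_le {n : ℕ} (μ ν : Measure (EuclideanSpace ℝ (Fin n))) [μ.Regular] [ν.Regular]
    (h : ∀ ψ : EuclideanSpace ℝ (Fin n) → ℝ, ContDiff ℝ (⊤ : ℕ∞) ψ → HasCompactSupport ψ →
      ∫ x, ψ x ∂μ = ∫ x, ψ x ∂ν) (U : Set (EuclideanSpace ℝ (Fin n))) (hU : IsOpen U)
    (hb : Bornology.IsBounded U) : μ U ≤ ν U := by
  rw [hU.measure_eq_iSup_isCompact μ]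
  refine iSup_le fun K => iSup_le fun hKU => iSup_le fun hK => ?_
  obtain ⟨f, hf, hr, hs, h1⟩ := exists_contMDiff_support_eq_eq_one_iff (n := (⊤ : ℕ∞))
    (modelWithCornersSelf ℝ (EuclideanSpace ℝ (Fin n))) hU hK.isClosed hKU
  have hfd := hf.contDiff
  have hfc : HasCompactSupport f := by
    unfold HasCompactSupport tsupport
    rw [hs]
    exact hb.isCompact_closure
  have hr' : ∀ x, 0 ≤ f x ∧ f x ≤ 1 := fun x => hr ⟨x, rfl⟩
  have key : ∫⁻ x, ENNReal.ofReal (f x) ∂μ = ∫⁻ x, ENNReal.ofReal (f x) ∂ν := by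
    rw [← ofReal_integral_eq_lintegral_ofReal
        (hfd.continuous.integrable_of_hasCompactSupport hfc) (ae_of_all _ fun x => (hr' x).1),
      ← ofReal_integral_eq_lintegral_ofReal
        (hfd.continuous.integrable_of_hasCompactSupport hfc) (ae_of_all _ fun x => (hr' x).1),
      h f hfd hfc]
  calc μ K = ∫⁻ x, K.indicator 1 x ∂μ := by rw [lintegral_indicator_one hK.measurableSet]
    _ ≤ ∫⁻ x, ENNReal.ofReal (f x) ∂μ := by
        refine lintegral_mono fun x => ?_
        by_cases hx : x ∈ K
        · simp [hx, (h1 x).1 hx]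
        · simp [hx]
    _ = ∫⁻ x, ENNReal.ofReal (f x) ∂ν := key
    _ ≤ ∫⁻ x, U.indicator 1 x ∂ν := by
        refine lintegral_mono fun x => ?_
        by_cases hx : x ∈ U
        · simpa [hx] using (hr' x).2
        · have : f x = 0 := by
            rw [← hs] at hx
            simpa using hx
          simp [this]
    _ = ν U := by rw [lintegral_indicator_one hU.measurableSet]

lemma aux_ext {n : ℕ} (μ ν : Measure (EuclideanSpace ℝ (Fin n))) [μ.Regular] [ν.Regular]
    (h : ∀ ψ : EuclideanSpace ℝ (Fin n) → ℝ, ContDiff ℝ (⊤ : ℕ∞) ψ → HasCompactSupport ψ →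
      ∫ x, ψ x ∂μ = ∫ x, ψ x ∂ν) : μ = ν :=
  Measure.OuterRegular.ext_isOpen_isBounded fun U hU hb =>
    le_antisymm (aux_le μ ν h U hU hb) (aux_le ν μ (fun ψ a b => (h ψ a b).symm) U hU hb)

lemma aux_deriv {n : ℕ} (a : ℝ)
    (η : Measure (EuclideanSpace ℝ (Fin n))) [IsFiniteMeasureOnCompacts η]
    (hdil : ∀ ψ : EuclideanSpace ℝ (Fin n) → ℝ, ContDiff ℝ (⊤ : ℕ∞) ψ → HasCompactSupport ψ →
      ∫ x, (a * ψ x + ⟪x, gradient ψ x⟫) ∂η = 0)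
    (ψ : EuclideanSpace ℝ (Fin n) → ℝ) (hψ : ContDiff ℝ (⊤ : ℕ∞) ψ) (hc : HasCompactSupport ψ)
    (t₀ : ℝ) :
    HasDerivAt (fun t : ℝ => ∫ x, Real.exp (a * t) * ψ (Real.exp t • x) ∂η) 0 t₀ := by
  have hd : Differentiable ℝ ψ := hψ.differentiable (by simp)
  have hfc : Continuous (fderiv ℝ ψ) := hψ.continuous_fderiv (by simp)
  have hψc := hψ.continuous
  let F' : ℝ → EuclideanSpace ℝ (Fin n) → ℝ := fun t x =>
    Real.exp (a * t) * (a * ψ (Real.exp t • x) + fderiv ℝ ψ (Real.exp t • x) (Real.exp t • x))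
  have hF'c : Continuous (fun p : ℝ × EuclideanSpace ℝ (Fin n) => F' p.1 p.2) := by
    have h1 : Continuous (fun p : ℝ × EuclideanSpace ℝ (Fin n) => Real.exp p.1 • p.2) := by
      fun_prop
    have h2 := (hfc.comp h1).clm_apply h1
    have h3 := hψc.comp h1
    have h4 : Continuous (fun p : ℝ × EuclideanSpace ℝ (Fin n) => Real.exp (a * p.1)) := by
      fun_prop
    exact h4.mul ((continuous_const.mul h3).add h2)
  obtain ⟨R, hR⟩ := hc.isCompact.isBounded.subset_closedBall 0
  set B : Set (EuclideanSpace ℝ (Fin n)) := closedBall 0 (Real.exp (1 - t₀) * R) with hB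
  have hBc : IsCompact B := isCompact_closedBall _ _
  obtain ⟨C, hC⟩ := ((isCompact_closedBall t₀ (1:ℝ)).prod hBc).exists_bound_of_continuousOn
    hF'c.continuousOn
  have hzero : ∀ t ∈ ball t₀ 1, ∀ x ∉ B, F' t x = 0 := by
    intro t ht x hx
    have hnot : Real.exp t • x ∉ tsupport ψ := by
      intro hmem
      apply hx
      have h1 := hR hmem
      rw [mem_closedBall_zero_iff, norm_smul, Real.norm_eq_abs, abs_of_pos (Real.exp_pos t)] at h1
      rw [hB, mem_closedBall_zero_iff]
      rw [mem_ball, Real.dist_eq, abs_lt] at ht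
      have h2 : ‖x‖ ≤ Real.exp (-t) * R := by
        rw [Real.exp_neg, inv_mul_eq_div, le_div_iff₀ (Real.exp_pos t)]
        linarith
      have hR0 : 0 ≤ R := le_trans (by positivity) h1
      refine h2.trans ?_
      gcongr
      linarith
    have e1 : ψ (Real.exp t • x) = 0 := image_eq_zero_of_notMem_tsupport hnot
    have e2 : fderiv ℝ ψ (Real.exp t • x) = 0 :=
      image_eq_zero_of_notMem_tsupport fun h => hnot (tsupport_fderiv_subset ℝ h)
    simp [F', e1, e2]
  have hsupp : ∀ t : ℝ, HasCompactSupport fun x => ψ (Real.exp t • x) := fun t =>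
    hc.comp_smul (Real.exp_ne_zero t)
  have hcd : ∀ t : ℝ, ContDiff ℝ (⊤ : ℕ∞) fun x => ψ (Real.exp t • x) := fun t =>
    hψ.comp (contDiff_const_smul _)
  have main := hasDerivAt_integral_of_dominated_loc_of_deriv_le (μ := η) (𝕜 := ℝ)
    (F := fun t x => Real.exp (a * t) * ψ (Real.exp t • x)) (F' := F') (x₀ := t₀)
    (s := ball t₀ 1) (bound := B.indicator fun _ => C) (ball_mem_nhds _ one_pos)
    (Eventually.of_forall fun t =>
      (continuous_const.mul (hcd t).continuous).aestronglyMeasurable)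
    (((hcd t₀).continuous.integrable_of_hasCompactSupport (hsupp t₀)).const_mul _)
    (hF'c.comp (by fun_prop : Continuous fun x => (t₀, x))).aestronglyMeasurable
    (ae_of_all _ fun x t ht => by
      by_cases hx : x ∈ B
      · simpa [hx] using hC (t, x) ⟨ball_subset_closedBall ht, hx⟩
      · simp [hx, hzero t ht x hx])
    ((integrable_indicator_iff hBc.measurableSet).2
      (integrableOn_const hBc.measure_lt_top.ne))
    (ae_of_all _ fun x t _ => by
      have h1 : HasDerivAt (fun t : ℝ => Real.exp t • x) (Real.exp t • x) t :=
        (Real.hasDerivAt_exp t).smul_const x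
      have h2 := (hd (Real.exp t • x)).hasFDerivAt.comp_hasDerivAt t h1
      have h3 : HasDerivAt (fun t : ℝ => Real.exp (a * t)) (Real.exp (a * t) * a) t := by
        simpa using ((hasDerivAt_id t).const_mul a).exp
      refine (h3.mul h2).congr_deriv ?_
      change _ = Real.exp (a * t) *
        (a * ψ (Real.exp t • x) + fderiv ℝ ψ (Real.exp t • x) (Real.exp t • x))
      simp only [Function.comp_apply]
      ring)
  have hz : ∫ x, F' t₀ x ∂η = 0 := by
    have := hdil _ (hcd t₀) (hsupp t₀)
    simp only [F']
    rw [integral_const_mul]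
    convert mul_zero _
    rw [← this]
    congr 1
    ext x
    rw [inner_gradient_right]
    have h4 : HasFDerivAt (fun x => ψ (Real.exp t₀ • x))
        ((fderiv ℝ ψ (Real.exp t₀ • x)).comp
          (Real.exp t₀ • ContinuousLinearMap.id ℝ (EuclideanSpace ℝ (Fin n)))) x := by
      have h5 : HasFDerivAt (fun y : EuclideanSpace ℝ (Fin n) => Real.exp t₀ • y)
          (Real.exp t₀ • ContinuousLinearMap.id ℝ (EuclideanSpace ℝ (Fin n))) x :=
        (hasFDerivAt_id x).const_smul (Real.exp t₀)
      exact (hd (Real.exp t₀ • x)).hasFDerivAt.comp x h5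
    rw [h4.fderiv]
    simp
  rw [← hz]
  exact main.2

/-- cone measure criterion. Let `η` be a Borel measure on `ℝⁿ` (`n ≥ 4`)
finite on compact sets such that `∫ ((n-4) ψ(x) + ⟨x, ∇ψ(x)⟩) dη(x) = 0` for every smooth
compactly supported `ψ`. Then `η` is a cone measure of degree `n - 4`:
`η(λ·E) = λ^{n-4} η(E)` for every `λ > 0` and Borel `E`. -/
theorem dilation_invariance_criterion_cone_measure
    (n : ℕ) (hn : 4 ≤ n)
    (η : Measure (EuclideanSpace ℝ (Fin n))) [IsFiniteMeasureOnCompacts η]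
    (hdil : ∀ ψ : EuclideanSpace ℝ (Fin n) → ℝ, ContDiff ℝ (⊤ : ℕ∞) ψ → HasCompactSupport ψ →
      ∫ x, (((n : ℝ) - 4) * ψ x + ⟪x, gradient ψ x⟫) ∂η = 0) :
    ∀ lam : ℝ, 0 < lam → ∀ E : Set (EuclideanSpace ℝ (Fin n)), MeasurableSet E →
      η ((fun x : EuclideanSpace ℝ (Fin n) => lam • x) '' E)
        = ENNReal.ofReal (lam ^ ((n : ℝ) - 4)) * η E := by
  intro lam hlam E hE
  set t : ℝ := Real.log lam with ht
  have hexp : Real.exp t = lam := Real.exp_log hlam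
  have hpow : Real.exp (((n : ℝ) - 4) * t) = lam ^ ((n : ℝ) - 4) := by
    rw [Real.rpow_def_of_pos hlam, mul_comm]
  have hne : lam ≠ 0 := hlam.ne'
  let φ : EuclideanSpace ℝ (Fin n) ≃ₜ EuclideanSpace ℝ (Fin n) := Homeomorph.smulOfNeZero lam hne
  have hφ : ∀ x, φ x = lam • x := fun x => rfl
  let c : ℝ≥0∞ := ENNReal.ofReal (lam ^ ((n : ℝ) - 4))
  have : (η.map φ).Regular := Measure.Regular.map φ
  have : (c • η.map φ).Regular := Measure.Regular.smul ENNReal.ofReal_ne_top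
  have heq : c • η.map φ = η := by
    refine aux_ext _ _ fun ψ hψ hc => ?_
    have hder := aux_deriv _ η hdil ψ hψ hc
    have hconst := is_const_of_deriv_eq_zero (fun s => (hder s).differentiableAt)
      (fun s => (hder s).deriv) t 0
    simp only [hexp, hpow, mul_zero, Real.exp_zero, one_smul, one_mul] at hconst
    rw [integral_smul_measure, φ.measurableEmbedding.integral_map, ← hconst,
      integral_const_mul, ENNReal.toReal_ofReal (by positivity)]
    rfl
  have hφE : (fun x : EuclideanSpace ℝ (Fin n) => lam • x) '' E = φ '' E := rfl
  rw [hφE]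
  conv_lhs => rw [← heq]
  rw [Measure.smul_apply, φ.measurableEmbedding.map_apply, φ.injective.preimage_image]
  rfl
end

section
/- Let n ≥ 4, a ≥ 0, c₀ ≥ 0. There exist constants ε₀ > 0 and C > 0, depending only on n, a and c₀, with the following property. Let x₀ ∈ ℝⁿ, 0 < r ≤ 1, and let u : ℝⁿ → ℝ be a C² function, nonnegative on ball x₀ r, satisfying the differential inequality Δu ≥ −c₀·(u^{3/2} + u) pointwise on ball x₀ r, and such that for every y ∈ ball x₀ (r/2) the function s ↦ e^{a s} s^{4−n} ∫_{ball y s} u d(vol) is nondecreasing on (0, r/2]. If r^{4−n} ∫_{ball x₀ r} u d(vol) ≤ ε₀², then sup_{x ∈ ball x₀ (r/4)} u(x) ≤ C · r^{−4} · ( r^{4−n} ∫_{ball x₀ r} u d(vol) ). -/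
open MeasureTheory Metric Filter Set
open scoped Topology ENNReal

/-- The Euclidean Laplacian of `u : ℝⁿ → ℝ` at `x`: the trace of the second derivative,
`Δu(x) = ∑ i ∂²u/∂xᵢ²(x)`, computed via the iterated Fréchet derivative evaluated on the
standard orthonormal basis of `EuclideanSpace ℝ (Fin n)`. -/
noncomputable def euclideanLaplacian {n : ℕ}
    (u : EuclideanSpace ℝ (Fin n) → ℝ) (x : EuclideanSpace ℝ (Fin n)) : ℝ :=
  ∑ i : Fin n,
    iteratedFDeriv ℝ 2 u x ![EuclideanSpace.single i (1 : ℝ), EuclideanSpace.single i (1 : ℝ)]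

noncomputable def bmp {n : ℕ} (z : EuclideanSpace ℝ (Fin n)) : ℝ := max (1 - ‖z‖ ^ 2) 0

lemma bmp_cont {n : ℕ} : Continuous (bmp (n := n)) := by
  unfold bmp; fun_prop

lemma bmp_nonneg {n : ℕ} (z : EuclideanSpace ℝ (Fin n)) : 0 ≤ bmp z := le_max_right _ _

lemma bmp_le_one {n : ℕ} (z : EuclideanSpace ℝ (Fin n)) : bmp z ≤ 1 := by
  unfold bmp
  apply max_le <;> nlinarith [sq_nonneg ‖z‖]

lemma bmp_zero {n : ℕ} (z : EuclideanSpace ℝ (Fin n)) (h : z ∉ ball 0 1) : bmp z = 0 := by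
  unfold bmp
  have : 1 ≤ ‖z‖ := by simpa using h
  apply max_eq_right
  nlinarith

lemma bmp_supp {n : ℕ} : HasCompactSupport (bmp (n := n)) := by
  apply HasCompactSupport.intro (isCompact_closedBall (0 : EuclideanSpace ℝ (Fin n)) 1)
  intro x hx
  exact bmp_zero x (fun h => hx (ball_subset_closedBall h))

lemma int_mul_bmp {n : ℕ} (f : EuclideanSpace ℝ (Fin n) → ℝ) (hf : Continuous f) :
    Integrable (fun z => f z * bmp z) :=
  (hf.mul bmp_cont).integrable_of_hasCompactSupport bmp_supp.mul_left

lemma bmp_integrable {n : ℕ} : Integrable (bmp (n := n)) :=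
  bmp_cont.integrable_of_hasCompactSupport bmp_supp

lemma bmp_int_pos {n : ℕ} : 0 < ∫ z : EuclideanSpace ℝ (Fin n), bmp z := by
  apply bmp_cont.integral_pos_of_hasCompactSupport_nonneg_nonzero (x := 0) bmp_supp bmp_nonneg
  simp [bmp]

lemma max_sq_deriv (x : ℝ) : HasDerivAt (fun x : ℝ => (max x 0) ^ 2) (2 * max x 0) x := by
  rcases lt_trichotomy x 0 with h | h | h
  · rw [max_eq_right h.le, mul_zero]
    apply (hasDerivAt_const x (0:ℝ)).congr_of_eventuallyEq
    filter_upwards [gt_mem_nhds h] with y hy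
    rw [max_eq_right (le_of_lt hy)]; simp
  · subst h
    rw [hasDerivAt_iff_isLittleO]
    simp only [max_self, mul_zero, smul_zero, sub_zero]
    norm_num
    have : (fun x : ℝ => (max x 0) ^ 2) =O[𝓝 0] (fun x : ℝ => x ^ 2) := by
      apply Asymptotics.IsBigO.of_bound 1
      filter_upwards with y
      rw [one_mul, norm_pow, norm_pow]
      gcongr
      rw [Real.norm_eq_abs, Real.norm_eq_abs, abs_of_nonneg (le_max_right y 0)]
      exact max_le (le_abs_self _) (abs_nonneg _)
    exact this.trans_isLittleO (Asymptotics.isLittleO_pow_id (by norm_num))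
  · rw [max_eq_left h.le]
    have := hasDerivAt_pow 2 x
    simp at this
    apply this.congr_of_eventuallyEq
    filter_upwards [lt_mem_nhds h] with y hy
    rw [max_eq_left (le_of_lt hy)]

lemma bmp_sq_fderiv {n : ℕ} (z : EuclideanSpace ℝ (Fin n)) :
    HasFDerivAt (fun z : EuclideanSpace ℝ (Fin n) => bmp z ^ 2)
      ((-4 * bmp z) • innerSL ℝ z) z := by
  have h1 : HasFDerivAt (fun z : EuclideanSpace ℝ (Fin n) => 1 - ‖z‖ ^ 2)
      (-(2 • innerSL ℝ z)) z := by
    have := (hasStrictFDerivAt_norm_sq z).hasFDerivAt.const_sub 1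
    simpa using this
  have := (max_sq_deriv (1 - ‖z‖ ^ 2)).comp_hasFDerivAt z h1
  refine this.congr_fderiv ?_
  ext v
  simp [bmp]
  ring

lemma w_deriv {n : ℕ} (u : EuclideanSpace ℝ (Fin n) → ℝ) (hu : ContDiff ℝ 2 u)
    (y : EuclideanSpace ℝ (Fin n)) (t : ℝ) :
    HasDerivAt (fun t : ℝ => ∫ z, u (y + t • z) * bmp z)
      (∫ z, fderiv ℝ u (y + t • z) z * bmp z) t := by
  have hc := hu.continuous
  have hdc : Continuous (fderiv ℝ u) := hu.continuous_fderiv (by norm_num)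
  have hd : Differentiable ℝ u := hu.differentiable (by norm_num)
  have hK : IsCompact ((closedBall t 1) ×ˢ (closedBall (0 : EuclideanSpace ℝ (Fin n)) 1)) :=
    (isCompact_closedBall _ _).prod (isCompact_closedBall _ _)
  have hcont : Continuous (fun p : ℝ × EuclideanSpace ℝ (Fin n) =>
      fderiv ℝ u (y + p.1 • p.2) p.2) := by fun_prop
  obtain ⟨B, hB⟩ := hK.exists_bound_of_continuousOn hcont.continuousOn
  refine (hasDerivAt_integral_of_dominated_loc_of_deriv_le (μ := volume)
    (F := fun t z => u (y + t • z) * bmp z)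
    (F' := fun t z => fderiv ℝ u (y + t • z) z * bmp z)
    (bound := fun z => B * bmp z) (s := closedBall t 1) (x₀ := t)
    (closedBall_mem_nhds t one_pos) ?_ ?_ ?_ ?_ ?_ ?_).2
  · filter_upwards with x
    exact (int_mul_bmp (fun z => u (y + x • z)) (by fun_prop)).aestronglyMeasurable
  · exact (int_mul_bmp (fun z => u (y + t • z)) (by fun_prop))
  · exact (int_mul_bmp (fun z => fderiv ℝ u (y + t • z) z) (by fun_prop)).aestronglyMeasurable
  · filter_upwards with z x hx
    by_cases hz : z ∈ ball (0 : EuclideanSpace ℝ (Fin n)) 1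
    · rw [norm_mul, Real.norm_of_nonneg (bmp_nonneg z)]
      exact mul_le_mul_of_nonneg_right (hB (x, z) ⟨hx, ball_subset_closedBall hz⟩) (bmp_nonneg z)
    · simp [bmp_zero z hz]
  · exact bmp_integrable.const_mul B
  · filter_upwards with z x hx
    have h1 : HasDerivAt (fun x : ℝ => y + x • z) z x := by
      simpa using ((hasDerivAt_id x).smul_const z).const_add y
    exact ((hd _).hasFDerivAt.comp_hasDerivAt x h1).mul_const _

lemma ibp {n : ℕ} (u : EuclideanSpace ℝ (Fin n) → ℝ) (hu : ContDiff ℝ 2 u)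
    (y : EuclideanSpace ℝ (Fin n)) (t : ℝ) :
    (∫ z, fderiv ℝ u (y + t • z) z * bmp z) =
      t / 4 * ∫ z, euclideanLaplacian u (y + t • z) * bmp z ^ 2 := by
  have hdc : Continuous (fderiv ℝ u) := hu.continuous_fderiv (by norm_num)
  have hd1 : ContDiff ℝ 1 (fderiv ℝ u) := hu.fderiv_right (by norm_num)
  have hd2 : Differentiable ℝ (fderiv ℝ u) := hd1.differentiable (by norm_num)
  have hddc : Continuous (fderiv ℝ (fderiv ℝ u)) := hd1.continuous_fderiv (by norm_num)
  let e : Fin n → EuclideanSpace ℝ (Fin n) := fun i => EuclideanSpace.single i 1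
  have hfd : ∀ i z, HasFDerivAt (fun z => fderiv ℝ u (y + t • z) (e i))
      ((t • (fderiv ℝ (fderiv ℝ u) (y + t • z))).flip (e i)) z := by
    intro i z
    have h1 : HasFDerivAt (fun z : EuclideanSpace ℝ (Fin n) => y + t • z)
      (t • ContinuousLinearMap.id ℝ _) z := ((hasFDerivAt_id z).const_smul t).const_add y
    have h2 := (hd2 (y + t • z)).hasFDerivAt.comp z h1
    have h3 := h2.clm_apply (hasFDerivAt_const (e i) z)
    refine h3.congr_fderiv ?_
    ext v
    simp
  have hg : ∀ i z, fderiv ℝ (fun z : EuclideanSpace ℝ (Fin n) => bmp z ^ 2) z (e i)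
      = -4 * bmp z * z i := by
    intro i z
    rw [(bmp_sq_fderiv z).fderiv]
    simp [e, EuclideanSpace.inner_single_right]
  have key : ∀ i, ∫ z, fderiv ℝ u (y + t • z) (e i) * z i * bmp z =
      t / 4 * ∫ z, fderiv ℝ (fderiv ℝ u) (y + t • z) (e i) (e i) * bmp z ^ 2 := by
    intro i
    have := integral_mul_fderiv_eq_neg_fderiv_mul_of_integrable (μ := volume)
      (f := fun z => fderiv ℝ u (y + t • z) (e i))
      (g := fun z : EuclideanSpace ℝ (Fin n) => bmp z ^ 2) (v := e i) ?_ ?_ ?_ ?_ ?_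
    · simp only [hg, (hfd _ _).fderiv] at this
      simp at this
      have h2 : ∀ z : EuclideanSpace ℝ (Fin n), fderiv ℝ u (y + t • z) (e i) * z i * bmp z
        = (-1/4) * -(fderiv ℝ u (y + t • z) (e i) * (4 * bmp z * z i)) := by intro z; ring
      simp_rw [h2]
      rw [integral_const_mul, this]
      simp_rw [mul_assoc]
      rw [integral_const_mul]
      ring
    · simp only [(hfd _ _).fderiv, pow_two, ← mul_assoc]
      apply int_mul_bmp
      have hb := bmp_cont (n := n)
      have ha : Continuous (fun z : EuclideanSpace ℝ (Fin n) => y + t • z) := by fun_prop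
      simp only [ContinuousLinearMap.flip_apply, ContinuousLinearMap.smul_apply, smul_eq_mul]
      exact (continuous_const.mul
        (((hddc.comp ha).clm_apply continuous_const).clm_apply continuous_const)).mul hb
    · simp only [hg]
      have : ∀ z : EuclideanSpace ℝ (Fin n), fderiv ℝ u (y + t • z) (e i) * (-4 * bmp z * z i)
        = (fderiv ℝ u (y + t • z) (e i) * (-4 * z i)) * bmp z := by intro z; ring
      simp_rw [this]
      apply int_mul_bmp
      fun_prop
    · simp only [pow_two, ← mul_assoc]
      apply int_mul_bmp
      have := bmp_cont (n := n)
      fun_prop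
    · intro z _; exact (hfd i z).differentiableAt
    · intro z _; exact (bmp_sq_fderiv z).differentiableAt
  have h3 : ∀ z : EuclideanSpace ℝ (Fin n), fderiv ℝ u (y + t • z) z * bmp z =
      ∑ i, fderiv ℝ u (y + t • z) (e i) * z i * bmp z := by
    intro z
    rw [← Finset.sum_mul]
    congr 1
    generalize fderiv ℝ u (y + t • z) = T
    conv_lhs => rw [← (EuclideanSpace.basisFun (Fin n) ℝ).sum_repr z, map_sum]
    simp [e, mul_comm]
  have h4 : ∀ x, euclideanLaplacian u x = ∑ i, fderiv ℝ (fderiv ℝ u) x (e i) (e i) := by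
    intro x
    simp [euclideanLaplacian, iteratedFDeriv_two_apply, e]
  simp_rw [h3, h4, Finset.sum_mul]
  rw [integral_finsetSum, integral_finsetSum, Finset.mul_sum]
  · exact Finset.sum_congr rfl fun i _ => key i
  · intro i _
    simp only [pow_two, ← mul_assoc]
    apply int_mul_bmp
    have hb := bmp_cont (n := n)
    have ha : Continuous (fun z : EuclideanSpace ℝ (Fin n) => y + t • z) := by fun_prop
    exact (((hddc.comp ha).clm_apply continuous_const).clm_apply continuous_const).mul hb
  · intro i _
    apply int_mul_bmp
    fun_prop

lemma mean_value {n : ℕ} (u : EuclideanSpace ℝ (Fin n) → ℝ) (hu : ContDiff ℝ 2 u)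
    (y : EuclideanSpace ℝ (Fin n)) (s L : ℝ) (hs : 0 < s) (hL : 0 ≤ L)
    (hpos : ∀ x ∈ ball y s, 0 ≤ u x) (hlap : ∀ x ∈ ball y s, -L ≤ euclideanLaplacian u x) :
    u y * (∫ z : EuclideanSpace ℝ (Fin n), bmp z) ≤ (s ^ n)⁻¹ * (∫ z in ball y s, u z)
      + L * s ^ 2 / 8 * (∫ z : EuclideanSpace ℝ (Fin n), bmp z) := by
  set A := ∫ z : EuclideanSpace ℝ (Fin n), bmp z with hA
  have hc := hu.continuous
  have hlc : Continuous (euclideanLaplacian u) := by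
    have hd1 : ContDiff ℝ 1 (fderiv ℝ u) := hu.fderiv_right (by norm_num)
    have hddc : Continuous (fderiv ℝ (fderiv ℝ u)) := hd1.continuous_fderiv (by norm_num)
    unfold euclideanLaplacian
    simp only [iteratedFDeriv_two_apply]
    exact continuous_finset_sum _ fun i _ =>
      (hddc.clm_apply continuous_const).clm_apply continuous_const
  have hm : ∀ t, 0 ≤ t → t ≤ s → ∀ z ∈ ball (0 : EuclideanSpace ℝ (Fin n)) 1,
      y + t • z ∈ ball y s := by
    intro t h0 h1 z hz
    have hz : ‖z‖ < 1 := by simpa using hz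
    simp [norm_smul, abs_of_nonneg h0]
    rcases h0.eq_or_lt with h | h
    · rw [← h]; simpa
    · nlinarith
  have hmono : MonotoneOn (fun t : ℝ => (∫ z, u (y + t • z) * bmp z) + L * A / 8 * t ^ 2)
      (Icc 0 s) := by
    have hD : ∀ t : ℝ, HasDerivAt
      (fun t : ℝ => (∫ z, u (y + t • z) * bmp z) + L * A / 8 * t ^ 2)
      ((∫ z, fderiv ℝ u (y + t • z) z * bmp z) + L * A / 8 * (2 * t)) t := by
      intro t
      have := (hasDerivAt_pow 2 t).const_mul (L * A / 8)
      simp only [Nat.cast_ofNat, Nat.add_one_sub_one, pow_one] at this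
      exact (w_deriv u hu y t).add this
    apply monotoneOn_of_deriv_nonneg (convex_Icc _ _)
    · exact fun t _ => (hD t).continuousAt.continuousWithinAt
    · exact fun t _ => (hD t).differentiableAt.differentiableWithinAt
    · intro t ht
      rw [interior_Icc] at ht
      rw [(hD t).deriv, ibp u hu]
      have h1 : ∫ z : EuclideanSpace ℝ (Fin n), -L * bmp z ≤
          ∫ z, euclideanLaplacian u (y + t • z) * bmp z ^ 2 := by
        apply integral_mono
        · exact bmp_integrable.const_mul _
        · simp only [pow_two, ← mul_assoc]
          apply int_mul_bmp
          have := bmp_cont (n := n)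
          fun_prop
        · intro z
          by_cases hz : z ∈ ball (0 : EuclideanSpace ℝ (Fin n)) 1
          · have h1 := hlap _ (hm t ht.1.le ht.2.le z hz)
            have h2 := bmp_nonneg z
            have h3 := bmp_le_one z
            have h4 : bmp z ^ 2 ≤ bmp z := by nlinarith
            dsimp only
            nlinarith [mul_nonneg hL (sub_nonneg.2 h4), sq_nonneg (bmp z)]
          · simp [bmp_zero z hz]
      rw [integral_const_mul, ← hA] at h1
      nlinarith [mul_le_mul_of_nonneg_left h1 ht.1.le]
  have h := hmono (left_mem_Icc.2 hs.le) (right_mem_Icc.2 hs.le) hs.le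
  simp only [zero_smul, add_zero, integral_const_mul] at h
  have h2 : ∫ z, u (y + s • z) * bmp z ≤ (s ^ n)⁻¹ * ∫ z in ball y s, u z := by
    have e1 : ∫ z in ball y s, u z
        = ∫ z, (ball y s).indicator u (y + z) := by
      rw [integral_add_left_eq_self (μ := volume) (fun z => (ball y s).indicator u z) y,
        integral_indicator measurableSet_ball]
    have e2 := Measure.integral_comp_smul_of_nonneg
      (volume : Measure (EuclideanSpace ℝ (Fin n)))
      (fun z => (ball y s).indicator u (y + z)) s (hR := hs.le)
    rw [finrank_euclideanSpace_fin, smul_eq_mul] at e2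
    rw [e1, ← e2]
    have hi : Integrable ((ball y s).indicator u) := by
      rw [integrable_indicator_iff measurableSet_ball]
      exact (hc.continuousOn.integrableOn_compact (isCompact_closedBall y s)).mono_set
        ball_subset_closedBall
    apply integral_mono
    · exact (int_mul_bmp (fun z => u (y + s • z)) (by fun_prop))
    · exact (hi.comp_add_left y).comp_smul hs.ne'
    · intro z
      dsimp only
      by_cases hz : z ∈ ball (0 : EuclideanSpace ℝ (Fin n)) 1
      · have := hm s hs.le le_rfl z hz
        rw [indicator_of_mem this]
        nlinarith [hpos _ this, bmp_le_one z]
      · rw [bmp_zero z hz, mul_zero]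
        exact indicator_nonneg hpos _
  have e3 : ∫ z : EuclideanSpace ℝ (Fin n), u y * bmp z = u y * A := integral_const_mul _ _
  linarith

lemma final_algebra (M d K s P E c : ℝ) (hM : 0 ≤ M) (hd : 0 < d) (hd1 : d ≤ 1) (hP : 0 < P)
    (hE : 0 ≤ E) (hK : K = c * (4 * √M + 1)) (hK0 : 0 ≤ K) (hs : (s ^ 2)⁻¹ = 4 / d ^ 2 + 4 * K)
    (hsmall : 1024 * P * c ^ 2 * E ≤ 1 / 2)
    (h : M ≤ P * (s ^ 4)⁻¹ * E) : M * d ^ 4 ≤ 64 * P * (1 + 2 * c ^ 2) * E := by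
  have h1 : (s ^ 4)⁻¹ = (4 / d ^ 2 + 4 * K) ^ 2 := by
    rw [← hs, inv_pow]; congr 1; ring
  have h2 : (s ^ 4)⁻¹ * d ^ 4 ≤ 32 * (1 + K ^ 2) := by
    have : (s ^ 4)⁻¹ * d ^ 4 = 16 * (1 + K * d ^ 2) ^ 2 := by
      rw [h1]; field_simp; norm_num
    rw [this]
    have h3 : K * d ^ 2 ≤ K := mul_le_of_le_one_right hK0 (pow_le_one₀ hd.le hd1)
    have h4 : 0 ≤ K * d ^ 2 := by positivity
    nlinarith [sq_nonneg (K * d ^ 2 - 1)]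
  have h2' : (s ^ 4)⁻¹ * d ^ 4 ≤ 32 * (1 + K ^ 2 * d ^ 4) := by
    have : (s ^ 4)⁻¹ * d ^ 4 = 16 * (1 + K * d ^ 2) ^ 2 := by
      rw [h1]; field_simp; norm_num
    rw [this]
    nlinarith [sq_nonneg (K * d ^ 2 - 1)]
  have h5 : K ^ 2 ≤ c ^ 2 * (32 * M + 2) := by
    rw [hK, mul_pow]
    apply mul_le_mul_of_nonneg_left _ (sq_nonneg c)
    nlinarith [Real.sq_sqrt hM, sq_nonneg (4 * √M - 1)]
  have hd4 : 0 < d ^ 4 := by positivity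
  have hd41 : d ^ 4 ≤ 1 := pow_le_one₀ hd.le hd1
  have h6 : K ^ 2 * d ^ 4 ≤ 32 * c ^ 2 * (M * d ^ 4) + 2 * c ^ 2 := by
    have := mul_le_mul_of_nonneg_right h5 hd4.le
    nlinarith [mul_le_mul_of_nonneg_left hd41 (sq_nonneg c)]
  have h7 : M * d ^ 4 ≤ P * E * ((s ^ 4)⁻¹ * d ^ 4) := by
    have := mul_le_mul_of_nonneg_right h hd4.le
    linarith
  have h8 : P * E * ((s ^ 4)⁻¹ * d ^ 4) ≤
      P * E * (32 * (1 + (32 * c ^ 2 * (M * d ^ 4) + 2 * c ^ 2))) := by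
    apply mul_le_mul_of_nonneg_left _ (by positivity)
    linarith
  have h9 := mul_le_mul_of_nonneg_right hsmall (show 0 ≤ M * d ^ 4 by positivity)
  nlinarith

set_option maxHeartbeats 1000000 in
/-- ε-regularity, analytic core. For `n ≥ 4`, `a ≥ 0`, `c₀ ≥ 0` there are
`ε₀ > 0` and `C > 0`, depending only on `n, a, c₀`, such that: if `u` is a `C²` function,
nonnegative on `ball x₀ r` (with `0 < r ≤ 1`), satisfying `Δu ≥ -c₀ (u^{3/2} + u)` there, and
whose scaled local energies `s ↦ e^{a s} s^{4-n} ∫_{ball y s} u` are nondecreasing on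
`(0, r/2]` for all `y ∈ ball x₀ (r/2)`, and if `r^{4-n} ∫_{ball x₀ r} u ≤ ε₀²`, then
`sup_{ball x₀ (r/4)} u ≤ C r⁻⁴ (r^{4-n} ∫_{ball x₀ r} u)`. -/
theorem epsilon_regularity_sup_bound
    (n : ℕ) (hn : 4 ≤ n) (a : ℝ) (ha : 0 ≤ a) (c₀ : ℝ) (hc₀ : 0 ≤ c₀) :
    ∃ ε₀ : ℝ, 0 < ε₀ ∧ ∃ C : ℝ, 0 < C ∧
      ∀ (x₀ : EuclideanSpace ℝ (Fin n)) (r : ℝ), 0 < r → r ≤ 1 →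
      ∀ u : EuclideanSpace ℝ (Fin n) → ℝ, ContDiff ℝ 2 u →
        (∀ x ∈ ball x₀ r, 0 ≤ u x) →
        (∀ x ∈ ball x₀ r,
          -c₀ * (u x ^ ((3 : ℝ) / 2) + u x) ≤ euclideanLaplacian u x) →
        (∀ y ∈ ball x₀ (r / 2),
          MonotoneOn
            (fun s : ℝ => Real.exp (a * s) * s ^ ((4 : ℝ) - n) * ∫ z in ball y s, u z)
            (Ioc (0 : ℝ) (r / 2))) →
        r ^ ((4 : ℝ) - n) * (∫ z in ball x₀ r, u z) ≤ ε₀ ^ 2 →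
        ∀ x ∈ ball x₀ (r / 4),
          u x ≤ C * r ^ (-4 : ℝ) * (r ^ ((4 : ℝ) - n) * ∫ z in ball x₀ r, u z) := by
  set A := ∫ z : EuclideanSpace ℝ (Fin n), bmp z with hA
  have hA0 : 0 < A := bmp_int_pos
  set P : ℝ := 2 / A * (Real.exp a * ((1 : ℝ) / 2) ^ ((4 : ℝ) - n)) with hP
  have hP0 : 0 < P := by positivity
  refine ⟨√(1 / (2048 * P * c₀ ^ 2 + 1)), by positivity, 256 * (64 * P * (1 + 2 * c₀ ^ 2)),
    by positivity, ?_⟩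
  intro x₀ r hr hr1 u hu hpos hlap hmono hsmall x hx
  rw [Real.sq_sqrt (by positivity)] at hsmall
  set E := r ^ ((4 : ℝ) - n) * ∫ z in ball x₀ r, u z with hE
  have hc := hu.continuous
  have hE0 : 0 ≤ E := mul_nonneg (by positivity) (setIntegral_nonneg measurableSet_ball hpos)
  have hsm : 1024 * P * c₀ ^ 2 * E ≤ 1 / 2 := by
    rw [le_div_iff₀ (by positivity)] at hsmall
    nlinarith
  obtain ⟨y, hy, hmax⟩ := (isCompact_closedBall x₀ (r / 2)).exists_isMaxOn
    (f := fun x => u x * (r / 2 - dist x x₀) ^ 4) ⟨x₀, by simp; positivity⟩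
    (by fun_prop)
  have hxd : dist x x₀ < r / 4 := hx
  have hmx : u x * (r / 2 - dist x x₀) ^ 4 ≤ u y * (r / 2 - dist y x₀) ^ 4 :=
    hmax (mem_closedBall.2 (by linarith))
  have hux : 0 ≤ u x := hpos x (mem_ball.2 (by linarith))
  have hxr : u x * (r / 4) ^ 4 ≤ u y * (r / 2 - dist y x₀) ^ 4 := by
    refine le_trans ?_ hmx
    gcongr
    linarith
  suffices hF : u y * (r / 2 - dist y x₀) ^ 4 ≤ 64 * P * (1 + 2 * c₀ ^ 2) * E by
    have e1 : r ^ (-4 : ℝ) = (r ^ 4)⁻¹ := by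
      rw [Real.rpow_neg hr.le]; norm_cast
    rw [e1, show 256 * (64 * P * (1 + 2 * c₀ ^ 2)) * (r ^ 4)⁻¹ * E =
      (256 * (64 * P * (1 + 2 * c₀ ^ 2) * E)) / r ^ 4 by field_simp, le_div_iff₀ (by positivity)]
    nlinarith
  have hyd : dist y x₀ ≤ r / 2 := hy
  have hRHS : 0 ≤ 64 * P * (1 + 2 * c₀ ^ 2) * E := by positivity
  rcases hyd.eq_or_lt with heq | hlt
  · rw [heq]; simpa using hRHS
  set d := r / 2 - dist y x₀ with hd
  have hd0 : 0 < d := by linarith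
  have hdr : d ≤ r / 2 := by linarith [dist_nonneg (x := y) (y := x₀)]
  have hM0 : 0 ≤ u y := hpos y (mem_ball.2 (by linarith))
  set K := c₀ * (4 * √(u y) + 1) with hK
  have hK0 : 0 ≤ K := by positivity
  set q := 4 / d ^ 2 + 4 * K with hq
  have hq0 : 0 < q := by positivity
  set s := √(q⁻¹) with hs
  have hs0 : 0 < s := by positivity
  have hs2 : s ^ 2 = q⁻¹ := Real.sq_sqrt (by positivity)
  have hsd : s ≤ d / 2 := by
    rw [hs]
    apply Real.sqrt_le_iff.2 ⟨by positivity, ?_⟩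
    rw [show (d / 2) ^ 2 = (4 / d ^ 2)⁻¹ by field_simp; norm_num]
    gcongr
    linarith
  have hKs : K * s ^ 2 ≤ 1 / 4 := by
    rw [hs2, ← div_eq_mul_inv, div_le_iff₀ hq0, hq]
    have : 0 ≤ 4 / d ^ 2 := by positivity
    linarith
  have hsub : ∀ z ∈ ball y s, z ∈ ball x₀ r := by
    intro z hz
    have := dist_triangle z y x₀
    rw [mem_ball] at hz ⊢
    linarith
  have hub : ∀ z ∈ ball y s, u z ≤ 16 * u y := by
    intro z hz
    have h1 := dist_triangle z y x₀
    have h3 := hpos z (hsub z hz)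
    rw [mem_ball] at hz
    have h2 : u z * (r / 2 - dist z x₀) ^ 4 ≤ u y * d ^ 4 :=
      hmax (mem_closedBall.2 (by linarith))
    have h4 : u z * (d / 2) ^ 4 ≤ u z * (r / 2 - dist z x₀) ^ 4 := by
      gcongr
      linarith
    have h5 : u z * d ^ 4 ≤ 16 * u y * d ^ 4 := by nlinarith
    exact le_of_mul_le_mul_right h5 (by positivity)
  have hL : ∀ z ∈ ball y s, -(16 * K * u y) ≤ euclideanLaplacian u z := by
    intro z hz
    refine le_trans ?_ (hlap z (hsub z hz))
    have h3 := hpos z (hsub z hz)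
    have h4 := hub z hz
    have h5 : u z ^ ((3 : ℝ) / 2) = u z * √(u z) := by
      rw [Real.sqrt_eq_rpow, show (3 : ℝ) / 2 = 1 + 1 / 2 by norm_num,
        Real.rpow_add' h3 (by norm_num), Real.rpow_one]
    have h6 : √(u z) ≤ 4 * √(u y) := by
      apply Real.sqrt_le_iff.2 ⟨by positivity, ?_⟩
      rw [mul_pow, Real.sq_sqrt hM0]; linarith
    rw [h5, hK]
    have h7 : u z * √(u z) + u z ≤ 16 * u y * (4 * √(u y) + 1) := by
      have : u z * (√(u z) + 1) ≤ 16 * u y * (4 * √(u y) + 1) := by gcongr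
      linarith
    nlinarith [mul_le_mul_of_nonneg_left h7 hc₀]
  have hmv := mean_value u hu y s (16 * K * u y) hs0 (by positivity)
    (fun z hz => hpos z (hsub z hz)) hL
  rw [← hA] at hmv
  have hmv2 : u y ≤ 2 / A * ((s ^ n)⁻¹ * ∫ z in ball y s, u z) := by
    rw [div_mul_eq_mul_div, le_div_iff₀ hA0]
    have : 16 * K * u y * s ^ 2 / 8 * A ≤ 1 / 2 * (u y * A) := by
      have := mul_le_mul_of_nonneg_right hKs (mul_nonneg hM0 hA0.le)
      nlinarith
    linarith
  have hsr : s ≤ r / 2 := by linarith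
  have hm := hmono y (mem_ball.2 hlt) (show s ∈ Ioc 0 (r / 2) from ⟨hs0, hsr⟩)
    (show r / 2 ∈ Ioc 0 (r / 2) from ⟨by positivity, le_rfl⟩) hsr
  dsimp only at hm
  have hIs : 0 ≤ ∫ z in ball y s, u z :=
    setIntegral_nonneg measurableSet_ball fun z hz => hpos z (hsub z hz)
  have hint : IntegrableOn u (ball x₀ r) :=
    (hc.continuousOn.integrableOn_compact (isCompact_closedBall x₀ r)).mono_set
        ball_subset_closedBall
  have hI : ∫ z in ball y (r / 2), u z ≤ ∫ z in ball x₀ r, u z := by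
    apply setIntegral_mono_set
    · exact hint
    · exact (ae_restrict_iff' measurableSet_ball).2 (Eventually.of_forall hpos)
    · apply LE.le.eventuallyLE
      apply ball_subset_ball'
      linarith
  have hm1 : s ^ ((4 : ℝ) - n) * ∫ z in ball y s, u z ≤
      Real.exp a * ((1 : ℝ) / 2) ^ ((4 : ℝ) - n) * E := by
    calc s ^ ((4 : ℝ) - n) * ∫ z in ball y s, u z
        ≤ Real.exp (a * s) * (s ^ ((4 : ℝ) - n) * ∫ z in ball y s, u z) := by
          apply le_mul_of_one_le_left (by positivity)
          exact Real.one_le_exp (by positivity)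
      _ ≤ Real.exp (a * (r / 2)) * (r / 2) ^ ((4 : ℝ) - n) * ∫ z in ball y (r / 2), u z := by
          rw [← mul_assoc]; exact hm
      _ ≤ Real.exp a * (r / 2) ^ ((4 : ℝ) - n) * ∫ z in ball x₀ r, u z := by
          gcongr ?_ * _ * ?_
          · exact setIntegral_nonneg measurableSet_ball fun z hz =>
              hpos z (ball_subset_ball' (by linarith) hz)
          · exact Real.exp_le_exp.2 (by nlinarith)
      _ = _ := by
          rw [hE, show r / 2 = 1 / 2 * r by ring, Real.mul_rpow (by norm_num) hr.le]
          ring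
  have hsn : (s ^ n)⁻¹ = (s ^ 4)⁻¹ * s ^ ((4 : ℝ) - n) := by
    rw [Real.rpow_sub hs0, Real.rpow_natCast, show (4 : ℝ) = ((4 : ℕ) : ℝ) by norm_num,
      Real.rpow_natCast]
    field_simp
  have hfin : u y ≤ P * (s ^ 4)⁻¹ * E := by
    refine hmv2.trans ?_
    rw [hsn, mul_assoc ((s ^ 4)⁻¹)]
    calc _ ≤ 2 / A * ((s ^ 4)⁻¹ * (Real.exp a * ((1 : ℝ) / 2) ^ ((4 : ℝ) - n) * E)) := by
          gcongr
      _ = _ := by rw [hP]; ring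
  exact final_algebra (u y) d K s P E c₀ hM0 hd0 (by linarith) hP0 hE0 hK hK0
    (by rw [hs2, inv_inv]) hsm hfin
end
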